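/- arXiv:1312.3679 — 2 statements merged into one kernel-verified Lean document; each statement's English description precedes it below -/
import Mathlib

section
/- Every simple x-monotone drawing of the complete graph K_n has at least Z(n) crossings; hence the monotone crossing number of K_n equals Z(n) (together with the matching upper bound). -/
/-- `Zval n` is Hill's conjectured value
`Z(n) = (1/4)⌊n/2⌋⌊(n−1)/2⌋⌊(n−2)/2⌋⌊(n−3)/2⌋` for the crossing number of `K n`.
(The product of the four floors is always divisible by 4, so natural division is exact.) -/
def Zval (n : ℕ) : ℕ :=
  n / 2 * ((n - 1) / 2) * ((n - 2) / 2) * ((n - 3) / 2) / 4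

/-- An x-monotone drawing of the complete graph `K n`: vertices `v i = (x i, 0)` with
`x` strictly increasing, and for each pair `i < j` a continuous function `e i j` on
`[x i, x j]` vanishing at the endpoints, whose graph is the arc of the edge `{i, j}`.
Edges avoid the intermediate vertices, any two distinct edges meet in finitely many
interior parameters, and at each such common point the difference changes sign
(a proper crossing). -/
structure XMonotoneDrawing (n : ℕ) where
  x : Fin n → ℝ
  x_strictMono : StrictMono x
  e : Fin n → Fin n → ℝ → ℝ
  cont : ∀ i j : Fin n, i < j → ContinuousOn (e i j) (Set.Icc (x i) (x j))
  end_left : ∀ i j : Fin n, i < j → e i j (x i) = 0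
  end_right : ∀ i j : Fin n, i < j → e i j (x j) = 0
  avoid_vertex : ∀ i m j : Fin n, i < m → m < j → e i j (x m) ≠ 0
  cross_finite : ∀ i j k l : Fin n, i < j → k < l → (i, j) ≠ (k, l) →
    {t : ℝ | max (x i) (x k) < t ∧ t < min (x j) (x l) ∧ e i j t = e k l t}.Finite
  sign_change : ∀ i j k l : Fin n, i < j → k < l → (i, j) ≠ (k, l) →
    ∀ t : ℝ, max (x i) (x k) < t → t < min (x j) (x l) → e i j t = e k l t →
      ∃ ε > (0 : ℝ), ∀ s : ℝ, max (x i) (x k) < s → t - ε < s → s < t →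
        ∀ u : ℝ, u < min (x j) (x l) → t < u → u < t + ε →
          (e i j s - e k l s) * (e i j u - e k l u) < 0

namespace XMonotoneDrawing

variable {n : ℕ}

/-- The set of parameters at which the edges `{i,j}` and `{k,l}` cross
(both edges are parametrized over the `x`-axis). -/
def crossSet (D : XMonotoneDrawing n) (i j k l : Fin n) : Set ℝ :=
  {t : ℝ | max (D.x i) (D.x k) < t ∧ t < min (D.x j) (D.x l) ∧ D.e i j t = D.e k l t}

/-- The number of crossings between the edges `{i,j}` and `{k,l}`. -/
noncomputable def crossCount (D : XMonotoneDrawing n) (i j k l : Fin n) : ℕ :=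
  (D.crossSet i j k l).ncard

/-- Two edges `{i,j}` and `{k,l}` are adjacent if they share an endpoint index. -/
def Adj (i j k l : Fin n) : Prop := i = k ∨ i = l ∨ j = k ∨ j = l

/-- A drawing is semisimple if no two adjacent edges cross. -/
def Semisimple (D : XMonotoneDrawing n) : Prop :=
  ∀ i j k l : Fin n, i < j → k < l → (i, j) ≠ (k, l) → Adj i j k l →
    D.crossCount i j k l = 0

/-- A drawing is weakly semisimple if every two adjacent edges cross an even
number of times. -/
def WeaklySemisimple (D : XMonotoneDrawing n) : Prop :=
  ∀ i j k l : Fin n, i < j → k < l → (i, j) ≠ (k, l) → Adj i j k l →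
    Even (D.crossCount i j k l)

/-- A drawing is simple if no two adjacent edges cross and every two non-adjacent
edges cross at most once. -/
def Simple (D : XMonotoneDrawing n) : Prop :=
  ∀ i j k l : Fin n, i < j → k < l → (i, j) ≠ (k, l) →
    (Adj i j k l → D.crossCount i j k l = 0) ∧
    (¬ Adj i j k l → D.crossCount i j k l ≤ 1)

/-- `cr D`: the total number of crossings of `D`. (Each unordered pair of distinct
edges is counted twice in the sum, whence the division by 2; `crossCount` is
symmetric in the two edges.) -/
noncomputable def cr (D : XMonotoneDrawing n) : ℕ :=
  (∑ p : (Fin n × Fin n) × (Fin n × Fin n),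
      if p.1.1 < p.1.2 ∧ p.2.1 < p.2.2 ∧ p.1 ≠ p.2 then
        D.crossCount p.1.1 p.1.2 p.2.1 p.2.2
      else 0) / 2

/-- `ocr D`: the number of unordered pairs of edges of `D` crossing an odd number
of times. (Each unordered pair appears twice as an ordered pair.) -/
noncomputable def ocr (D : XMonotoneDrawing n) : ℕ :=
  {p : (Fin n × Fin n) × (Fin n × Fin n) |
    p.1.1 < p.1.2 ∧ p.2.1 < p.2.2 ∧ p.1 ≠ p.2 ∧
      Odd (D.crossCount p.1.1 p.1.2 p.2.1 p.2.2)}.ncard / 2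

/-- The signature of the triple `i < j < k`: `true` (i.e. `+`) if the vertex `v j`
lies below the edge `{i, k}`, i.e. `e i k (x j) > 0`, and `false` (i.e. `−`) otherwise. -/
noncomputable def sig (D : XMonotoneDrawing n) (i j k : Fin n) : Bool :=
  if 0 < D.e i k (D.x j) then true else false

/-- `D` realizes the signature function `σ` if `σ_D` and `σ` agree on all
increasing triples. -/
def Realizes (D : XMonotoneDrawing n) (σ : Fin n → Fin n → Fin n → Bool) : Prop :=
  ∀ i j k : Fin n, i < j → j < k → D.sig i j k = σ i j k

/-- A drawing is pseudolinear if its edges extend to continuous curves over all of `ℝ`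
that avoid all vertices other than their endpoints and such that any two of these
extended curves cross exactly once (the crossing being a sign change of the difference). -/
def Pseudolinear (D : XMonotoneDrawing n) : Prop :=
  ∃ p : Fin n → Fin n → ℝ → ℝ,
    (∀ i j : Fin n, i < j → Continuous (p i j)) ∧
    (∀ i j : Fin n, i < j → ∀ t ∈ Set.Icc (D.x i) (D.x j), p i j t = D.e i j t) ∧
    (∀ i j m : Fin n, i < j → m ≠ i → m ≠ j → p i j (D.x m) ≠ 0) ∧
    (∀ i j k l : Fin n, i < j → k < l → (i, j) ≠ (k, l) →
      ∃ t : ℝ, p i j t = p k l t ∧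
        ∀ s u : ℝ, s < t → t < u →
          (p i j s - p k l s) * (p i j u - p k l u) < 0)

/-- The arc of the edge `{i, j}` as a subset of the plane `ℝ × ℝ`. -/
def edgeArc (D : XMonotoneDrawing n) (i j : Fin n) : Set (ℝ × ℝ) :=
  {q : ℝ × ℝ | D.x i ≤ q.1 ∧ q.1 ≤ D.x j ∧ q.2 = D.e i j q.1}

/-- The union of all edge arcs of the drawing. -/
def arcUnion (D : XMonotoneDrawing n) : Set (ℝ × ℝ) :=
  ⋃ i : Fin n, ⋃ j : Fin n, ⋃ (_ : i < j), D.edgeArc i j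

end XMonotoneDrawing

namespace Sig

variable {n : ℕ}

/-- With respect to a signature function `σ`, the vertex `m ∉ {i, j}` is on the left of
the directed edge `(i, j)` (where `i < j`). -/
def LeftOf (σ : Fin n → Fin n → Fin n → Bool) (i j m : Fin n) : Prop :=
  (i < m ∧ m < j ∧ σ i m j = false) ∨ (m < i ∧ σ m i j = true) ∨ (j < m ∧ σ i j m = true)

/-- The number of vertices on the left of the directed edge `(i, j)`. -/
noncomputable def leftCount (σ : Fin n → Fin n → Fin n → Bool) (i j : Fin n) : ℕ :=
  {m : Fin n | LeftOf σ i j m}.ncard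

/-- The edge `{i, j}` (with `i < j`) is a `k`-edge of `σ` if `min(ℓ, n − 2 − ℓ) = k`,
where `ℓ` is the number of vertices on its left. -/
def IsKEdge (σ : Fin n → Fin n → Fin n → Bool) (k : ℕ) (i j : Fin n) : Prop :=
  min (leftCount σ i j) (n - 2 - leftCount σ i j) = k

/-- `Ek σ k`: the number of `k`-edges of `σ`. -/
noncomputable def Ek (σ : Fin n → Fin n → Fin n → Bool) (k : ℕ) : ℕ :=
  {p : Fin n × Fin n | p.1 < p.2 ∧ IsKEdge σ k p.1 p.2}.ncard

/-- `Ele σ k = E_{≤k}(σ)`: the number of `≤k`-edges of `σ`. -/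
noncomputable def Ele (σ : Fin n → Fin n → Fin n → Bool) (k : ℕ) : ℕ :=
  ∑ i ∈ Finset.range (k + 1), Ek σ i

/-- `Elele σ k = E_{≤≤k}(σ) = Σ_{j=0}^{k} E_{≤j}(σ)`. -/
noncomputable def Elele (σ : Fin n → Fin n → Fin n → Bool) (k : ℕ) : ℕ :=
  ∑ j ∈ Finset.range (k + 1), Ele σ j

/-- `E_{≤≤k}` with an integer index, which vanishes for negative `k`. -/
noncomputable def ElelZ (σ : Fin n → Fin n → Fin n → Bool) (k : ℤ) : ℕ :=
  if 0 ≤ k then Elele σ k.toNat else 0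

/-- The left count of the edge `{i, j}` in the drawing restricted to the first
`n − 1` vertices (the last vertex deleted). -/
noncomputable def leftCountRes (σ : Fin n → Fin n → Fin n → Bool) (i j : Fin n) : ℕ :=
  {m : Fin n | LeftOf σ i j m ∧ (m : ℕ) + 1 < n}.ncard

/-- The edge `{i, j}` is a `k`-edge of the restriction of `σ` to the first `n − 1`
vertices (there `min(ℓ', (n−1) − 2 − ℓ') = k`). -/
def IsKEdgeRes (σ : Fin n → Fin n → Fin n → Bool) (k : ℕ) (i j : Fin n) : Prop :=
  min (leftCountRes σ i j) (n - 3 - leftCountRes σ i j) = k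

/-- The edge `{i, j}` is a `(D,D')`-invariant `≤k`-edge: it avoids the last vertex and
is an `m`-edge with `m ≤ k` both in `σ` and in the restriction of `σ` to the first
`n − 1` vertices. -/
def InvariantLeK (σ : Fin n → Fin n → Fin n → Bool) (k : ℕ) (i j : Fin n) : Prop :=
  (j : ℕ) + 1 < n ∧ (∃ m ≤ k, IsKEdge σ m i j) ∧ (∃ m ≤ k, IsKEdgeRes σ m i j)

/-- The ten 4-tuple forms allowed in signature functions of semisimple x-monotone
drawings: `++++, −−−−, ++−−, −−++, −++−, +−−+, −−−+, +++−, +−−−, −+++`. -/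
def AllowedForm (a b c d : Bool) : Prop :=
  (a, b, c, d) ∈ ([(true, true, true, true), (false, false, false, false),
    (true, true, false, false), (false, false, true, true),
    (false, true, true, false), (true, false, false, true),
    (false, false, false, true), (true, true, true, false),
    (true, false, false, false), (false, true, true, true)] :
      List (Bool × Bool × Bool × Bool))

/-- A signature function is admissible if every increasing 4-tuple is of one of the
ten allowed forms. -/
def Admissible (σ : Fin n → Fin n → Fin n → Bool) : Prop :=
  ∀ a b c d : Fin n, a < b → b < c → c < d →
    AllowedForm (σ a b c) (σ a b d) (σ a c d) (σ b c d)

/-- The six convex forms: `++++, −−−−, ++−−, −−++, −++−, +−−+`. -/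
def ConvexForm (a b c d : Bool) : Prop :=
  (a, b, c, d) ∈ ([(true, true, true, true), (false, false, false, false),
    (true, true, false, false), (false, false, true, true),
    (false, true, true, false), (true, false, false, true)] :
      List (Bool × Bool × Bool × Bool))

/-- The 4-tuple `a < b < c < d` is convex in `σ`. -/
def Convex4 (σ : Fin n → Fin n → Fin n → Bool) (a b c d : Fin n) : Prop :=
  ConvexForm (σ a b c) (σ a b d) (σ a c d) (σ b c d)

/-- The eight 4-tuple forms of pseudolinear x-monotone drawings (the sign-monotone
sequences): `++++, +++−, ++−−, +−−−, −−−−, −−−+, −−++, −+++`. -/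
def PLForm (a b c d : Bool) : Prop :=
  (a, b, c, d) ∈ ([(true, true, true, true), (true, true, true, false),
    (true, true, false, false), (true, false, false, false),
    (false, false, false, false), (false, false, false, true),
    (false, false, true, true), (false, true, true, true)] :
      List (Bool × Bool × Bool × Bool))

/-- The relation `j ⋖ k` on `{j : i < j}`: `j ⋖ k` iff (`j < k` and `σ i j k = +`)
or (`k < j` and `σ i k j = −`). -/
def Below (σ : Fin n → Fin n → Fin n → Bool) (i j k : Fin n) : Prop :=
  (j < k ∧ σ i j k = true) ∨ (k < j ∧ σ i k j = false)

end Sig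

/-!
Just to the right of its vertices, a drawing orders the active edges by height. An odd crossing
between two adjacent edges can be undone by swapping them locally, which does not create inversions
between consecutive orders, so one may assume that adjacent edges are never inverted. The signature
of such a drawing is admissible, and its number of independent pairs of oddly crossing edges is
determined by the squares of the imbalances of the edges, that is by the numbers of `k`-edges. The
bound `E_{≤≤k} ≥ 3 * (k + 3).choose 3`, proved by induction on `n` by deleting the last vertex, then
gives `Z(n)`. Equality holds when the edges are parabolas above or below the axis and the side of
`{i, j}` depends only on whether `(i + j) % n` is less than `⌈n / 2⌉`.
-/

open Finset

namespace MonotoneKn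

/-- The edges of the complete graph on `0, …, n - 1`, as pairs `(i, j)` with `i < j`. -/
def edges (n : ℕ) : Finset (ℕ × ℕ) := {e ∈ range n ×ˢ range n | e.1 < e.2}

/-- The quadruples `a < b < c < d < n`, encoded as the pairs of edges `((a, b), (c, d))`. -/
def quads (n : ℕ) : Finset ((ℕ × ℕ) × (ℕ × ℕ)) := {q ∈ edges n ×ˢ edges n | q.1.2 < q.2.1}

/-- The ordered pairs of edges without a common endpoint. -/
def disjointPairs (n : ℕ) : Finset ((ℕ × ℕ) × (ℕ × ℕ)) :=
  {p ∈ edges n ×ˢ edges n |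
    p.1.1 ≠ p.2.1 ∧ p.1.1 ≠ p.2.2 ∧ p.1.2 ≠ p.2.1 ∧ p.1.2 ≠ p.2.2}

section Sums

variable {M : Type*} [AddCommMonoid M]

lemma mem_edges {n : ℕ} {e : ℕ × ℕ} : e ∈ edges n ↔ e.1 < e.2 ∧ e.2 < n := by
  simp only [edges, mem_filter, mem_product, mem_range]
  omega

lemma mem_quads {n : ℕ} {q : (ℕ × ℕ) × (ℕ × ℕ)} :
    q ∈ quads n ↔ q.1.1 < q.1.2 ∧ q.1.2 < q.2.1 ∧ q.2.1 < q.2.2 ∧ q.2.2 < n := by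
  simp only [quads, mem_filter, mem_product, mem_edges]
  omega

lemma mem_disjointPairs {n : ℕ} {p : (ℕ × ℕ) × (ℕ × ℕ)} :
    p ∈ disjointPairs n ↔ (p.1 ∈ edges n ∧ p.2 ∈ edges n) ∧
      p.1.1 ≠ p.2.1 ∧ p.1.1 ≠ p.2.2 ∧ p.1.2 ≠ p.2.1 ∧ p.1.2 ≠ p.2.2 := by
  simp only [disjointPairs, mem_filter, mem_product]

lemma sum_edges_succ (n : ℕ) (F : ℕ × ℕ → M) :
    ∑ e ∈ edges (n + 1), F e = ∑ e ∈ edges n, F e + ∑ i ∈ range n, F (i, n) := by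
  have last : ∑ i ∈ range n, F (i, n) = ∑ e ∈ edges (n + 1) with e.2 = n, F e := by
    refine sum_nbij' (fun i => (i, n)) Prod.fst ?_ ?_ ?_ ?_ ?_ <;> grind [mem_edges]
  rw [last, ← sum_filter_add_sum_filter_not (edges (n + 1)) (fun e => e.2 < n) F]
  congr 2 <;> ext e <;> simp only [mem_filter, mem_edges] <;> omega

lemma sum_edges_add (p q : ℕ) (F : ℕ × ℕ → M) :
    ∑ e ∈ edges (p + q), F e = ∑ e ∈ edges p, F e +
      ∑ i ∈ range p, ∑ b ∈ range q, F (i, p + b) + ∑ e ∈ edges q, F (p + e.1, p + e.2) := by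
  induction q with
  | zero => simp [edges]
  | succ q ih =>
    simp only [← add_assoc, sum_edges_succ, ih, sum_range_add, sum_range_succ, sum_add_distrib]
    abel

lemma sum_edges_succ_shift (n : ℕ) (F : ℕ × ℕ → M) :
    ∑ e ∈ edges (n + 1), F e =
      ∑ e ∈ edges n, F (e.1, e.2 + 1) + ∑ a ∈ range n, F (a, a + 1) := by
  induction n with
  | zero => simp [edges, filter_singleton]
  | succ n ih =>
    rw [sum_edges_succ, ih, sum_edges_succ, sum_range_succ, sum_range_succ]
    abel

/-- Two disjoint edges interleave in six ways. -/
lemma sum_disjointPairs (n : ℕ) (G : ℕ × ℕ → ℕ × ℕ → M) :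
    ∑ p ∈ disjointPairs n, G p.1 p.2 = ∑ q ∈ quads n,
      (G (q.1.1, q.1.2) (q.2.1, q.2.2) + G (q.1.1, q.2.1) (q.1.2, q.2.2) +
        G (q.1.1, q.2.2) (q.1.2, q.2.1) + G (q.1.2, q.2.1) (q.1.1, q.2.2) +
        G (q.1.2, q.2.2) (q.1.1, q.2.1) + G (q.2.1, q.2.2) (q.1.1, q.1.2)) := by
  have split (p : (ℕ × ℕ) × (ℕ × ℕ)) (hp : p ∈ disjointPairs n) : G p.1 p.2 =
      (if p.1.2 < p.2.1 then G p.1 p.2 else 0) +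
      (if p.1.1 < p.2.1 ∧ p.2.1 < p.1.2 ∧ p.1.2 < p.2.2 then G p.1 p.2 else 0) +
      (if p.1.1 < p.2.1 ∧ p.2.2 < p.1.2 then G p.1 p.2 else 0) +
      (if p.2.1 < p.1.1 ∧ p.1.2 < p.2.2 then G p.1 p.2 else 0) +
      (if p.2.1 < p.1.1 ∧ p.1.1 < p.2.2 ∧ p.2.2 < p.1.2 then G p.1 p.2 else 0) +
      (if p.2.2 < p.1.1 then G p.1 p.2 else 0) := by
    grind (splits := 30) [mem_disjointPairs, mem_edges]
  rw [sum_congr rfl split]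
  simp only [sum_add_distrib, ← sum_filter]
  congrm ?_ + ?_ + ?_ + ?_ + ?_ + ?_
  · refine sum_nbij' (fun p => p) (fun q => q) ?_ ?_ ?_ ?_ ?_ <;>
      grind [mem_disjointPairs, mem_edges, mem_quads]
  · refine sum_nbij' (fun p => ((p.1.1, p.2.1), (p.1.2, p.2.2)))
      (fun q => ((q.1.1, q.2.1), (q.1.2, q.2.2))) ?_ ?_ ?_ ?_ ?_ <;>
      grind [mem_disjointPairs, mem_edges, mem_quads]
  · refine sum_nbij' (fun p => ((p.1.1, p.2.1), (p.2.2, p.1.2)))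
      (fun q => ((q.1.1, q.2.2), (q.1.2, q.2.1))) ?_ ?_ ?_ ?_ ?_ <;>
      grind [mem_disjointPairs, mem_edges, mem_quads]
  · refine sum_nbij' (fun p => ((p.2.1, p.1.1), (p.1.2, p.2.2)))
      (fun q => ((q.1.2, q.2.1), (q.1.1, q.2.2))) ?_ ?_ ?_ ?_ ?_ <;>
      grind [mem_disjointPairs, mem_edges, mem_quads]
  · refine sum_nbij' (fun p => ((p.2.1, p.1.1), (p.2.2, p.1.2)))
      (fun q => ((q.1.2, q.2.2), (q.1.1, q.2.1))) ?_ ?_ ?_ ?_ ?_ <;>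
      grind [mem_disjointPairs, mem_edges, mem_quads]
  · refine sum_nbij' (fun p => (p.2, p.1)) (fun q => (q.2, q.1)) ?_ ?_ ?_ ?_ ?_ <;>
      grind [mem_disjointPairs, mem_edges, mem_quads]

lemma two_mul_card_edges (n : ℕ) : 2 * (#(edges n) : ℤ) = n * (n - 1) := by
  induction n with
  | zero => simp [edges]
  | succ n ih =>
    have := sum_edges_succ n fun _ => 1
    simp only [← card_eq_sum_ones, card_range] at this
    rw [this]
    push_cast
    linarith

lemma sq_sum_range {R : Type*} [CommSemiring R] (n : ℕ) (f : ℕ → R) :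
    (∑ m ∈ range n, f m) ^ 2 =
      ∑ m ∈ range n, f m ^ 2 + 2 * ∑ e ∈ edges n, f e.1 * f e.2 := by
  induction n with
  | zero => simp [edges]
  | succ n ih =>
    rw [sum_range_succ, sum_range_succ, sum_edges_succ, add_sq, ih]
    simp only [mul_add, mul_assoc, sum_mul]
    ring

end Sums

section Rank

variable {α : Type*} {A : Finset α} {r : α → α → Prop} [DecidableRel r]

lemma card_filter_rel_lt (hirr : ∀ a ∈ A, ¬ r a a)
    (htr : ∀ a ∈ A, ∀ b ∈ A, ∀ c ∈ A, r a b → r b c → r a c) {a b : α} (ha : a ∈ A) (hb : b ∈ A)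
    (hab : r a b) : #{m ∈ A | r m a} < #{m ∈ A | r m b} := by
  refine card_lt_card ⟨fun m hm => ?_, fun hsub => ?_⟩
  · rw [mem_filter] at hm ⊢
    exact ⟨hm.1, htr m hm.1 a ha b hb hm.2 hab⟩
  · exact hirr a ha (mem_filter.1 (hsub (mem_filter.2 ⟨ha, hab⟩))).2

/-- The ranks of the elements of a strictly linearly ordered finite set are `0, …, #A - 1`. -/
lemma sum_comp_rank {M : Type*} [AddCommMonoid M] (hirr : ∀ a ∈ A, ¬ r a a)
    (htot : ∀ a ∈ A, ∀ b ∈ A, a ≠ b → r a b ∨ r b a)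
    (htr : ∀ a ∈ A, ∀ b ∈ A, ∀ c ∈ A, r a b → r b c → r a c) (g : ℕ → M) :
    ∑ a ∈ A, g #{m ∈ A | r m a} = ∑ x ∈ range #A, g x := by
  have inj : Set.InjOn (fun a => #{m ∈ A | r m a}) A := by
    intro a ha b hb hab
    by_contra hne
    rcases htot a ha b hb hne with h | h
    · exact (card_filter_rel_lt hirr htr ha hb h).ne hab
    · exact (card_filter_rel_lt hirr htr hb ha h).ne' hab
  have image_eq : A.image (fun a => #{m ∈ A | r m a}) = range #A := by
    refine eq_of_subset_of_card_le (image_subset_iff.2 fun a ha => ?_) ?_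
    · exact mem_range.2 (card_lt_card (filter_ssubset.2 ⟨a, ha, hirr a ha⟩))
    · rw [card_range, card_image_of_injOn inj]
  rw [← image_eq, sum_image inj]

lemma card_filter_rank_lt (hirr : ∀ a ∈ A, ¬ r a a)
    (htot : ∀ a ∈ A, ∀ b ∈ A, a ≠ b → r a b ∨ r b a)
    (htr : ∀ a ∈ A, ∀ b ∈ A, ∀ c ∈ A, r a b → r b c → r a c) (t : ℕ) :
    #{a ∈ A | #{m ∈ A | r m a} < t} = min #A t := by
  rw [card_filter, sum_comp_rank hirr htot htr (fun x => if x < t then 1 else 0),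
    ← card_filter, ← card_range (min #A t)]
  congr 1
  ext x
  simp

end Rank

section TruncatedSums

lemma two_mul_sum_range_tsub {N n : ℕ} (h : N ≤ n) :
    2 * ∑ x ∈ range n, (N - x) = N * (N + 1) := by
  induction n generalizing N with
  | zero => simp [Nat.le_zero.1 h]
  | succ n ih =>
    rcases N with _ | N
    · simp
    · simp only [sum_range_succ', Nat.add_sub_add_right, mul_add, ih (Nat.le_of_succ_le_succ h)]
      simp only [Nat.sub_zero]
      ring

lemma two_mul_sum_range_sub_tsub {m μ : ℕ} :
    2 * ∑ K ∈ range m, (K - μ) = (m - 1 - μ) * (m - 1 - μ + 1) := by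
  rw [← sum_range_reflect, ← two_mul_sum_range_tsub (show m - 1 - μ ≤ m by omega)]
  simp only [Nat.sub_right_comm]

lemma sum_range_tsub_min {N n : ℕ} (h : 2 * N ≤ n) :
    ∑ x ∈ range n, (N - min x (n - 1 - x)) = N * (N + 1) := by
  have split (x : ℕ) (hx : x ∈ range n) :
      N - min x (n - 1 - x) = (N - x) + (N - (n - 1 - x)) := by
    have := mem_range.1 hx
    omega
  rw [sum_congr rfl split, sum_add_distrib, sum_range_reflect (fun x => N - x), ← two_mul,
    two_mul_sum_range_tsub (by omega)]

end TruncatedSums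

section Signature

/-- A signature on triples of naturals; only its values on `i < j < k` matter. As in `Sig`, the
value `true` means that the vertex `j` lies below the edge `(i, k)`. -/
abbrev Signature := ℕ → ℕ → ℕ → Bool

namespace Signature

/-- The signature of the drawing reflected in the axis of the vertices. -/
def mirror (σ : Signature) : Signature := fun i j k => !σ i j k

/-- The vertex `m` lies to the left of the directed edge `(i, j)`, where `i < j`. It lies to the
right if it lies to the left for `σ.mirror`. -/
def IsLeft (σ : Signature) (i j m : ℕ) : Prop :=
  (i < m ∧ m < j ∧ σ i m j = false) ∨ (m < i ∧ σ m i j = true) ∨ (j < m ∧ σ i j m = true)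

instance (σ : Signature) (i j m : ℕ) : Decidable (σ.IsLeft i j m) := by
  unfold IsLeft; infer_instance

/-- `1` to the left, `-1` to the right and `0` at the endpoints of the edge `(i, j)`. -/
def side (σ : Signature) (i j m : ℕ) : ℤ :=
  (if σ.IsLeft i j m then 1 else 0) - (if σ.mirror.IsLeft i j m then 1 else 0)

/-- The number of vertices to the left of `(i, j)` among the first `n`. -/
def leftCard (σ : Signature) (n i j : ℕ) : ℕ := #{m ∈ range n | σ.IsLeft i j m}

/-- The number of vertices to the right of `(i, j)` among the first `n`. -/
def rightCard (σ : Signature) (n i j : ℕ) : ℕ := σ.mirror.leftCard n i j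

/-- The number of vertices to the left of `(i, j)` minus the number to its right. -/
def imbalance (σ : Signature) (n i j : ℕ) : ℤ := ∑ m ∈ range n, σ.side i j m

/-- Transitivity of the rotations at the first and at the last vertex of every quadruple. These are
the ten forms allowed by `Sig.AllowedForm`. -/
def Admissible (σ : Signature) (n : ℕ) : Prop :=
  ∀ a b c d : ℕ, a < b → b < c → c < d → d < n →
    (σ a b c = σ a c d → σ a b d = σ a b c) ∧ (σ a b d = σ b c d → σ a c d = σ a b d)

/-- The number of independent pairs of edges of the `K₄` on `a < b < c < d` which the
signature forces to cross an odd number of times. -/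
def oddPairs (σ : Signature) (a b c d : ℕ) : ℕ :=
  (if σ a b c = σ b c d then 1 else 0) + (if σ a b d ≠ σ a c d then 1 else 0)

/-- The number of independent pairs of edges of `K n` forced to cross an odd number of times. -/
def oddCrossings (σ : Signature) (n : ℕ) : ℕ :=
  ∑ q ∈ quads n, σ.oddPairs q.1.1 q.1.2 q.2.1 q.2.2

variable {σ : Signature} {n i j m : ℕ}

@[simp] lemma mirror_mirror (σ : Signature) : σ.mirror.mirror = σ := by
  funext i j k
  simp [mirror]

lemma Admissible.mirror (hσ : σ.Admissible n) : σ.mirror.Admissible n := by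
  simpa [Admissible, Signature.mirror] using hσ

lemma Admissible.mono {N : ℕ} (hσ : σ.Admissible N) (h : n ≤ N) : σ.Admissible n :=
  fun a b c d hab hbc hcd hd => hσ a b c d hab hbc hcd (hd.trans_le h)

lemma isLeft_mirror_iff (hij : i < j) :
    σ.mirror.IsLeft i j m ↔ m ≠ i ∧ m ≠ j ∧ ¬ σ.IsLeft i j m := by
  unfold IsLeft mirror
  grind

lemma side_of_mid (him : i < m) (hmj : m < j) : σ.side i j m = if σ i m j then -1 else 1 := by
  grind [side, IsLeft, mirror]

lemma side_of_lt (hmi : m < i) (hij : i < j) : σ.side i j m = if σ m i j then 1 else -1 := by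
  grind [side, IsLeft, mirror]

lemma side_of_gt (hjm : j < m) (hij : i < j) : σ.side i j m = if σ i j m then 1 else -1 := by
  grind [side, IsLeft, mirror]

lemma side_self_left (hij : i < j) : σ.side i j i = 0 := by
  grind [side, IsLeft]

lemma side_self_right (hij : i < j) : σ.side i j j = 0 := by
  grind [side, IsLeft]

lemma side_sq (hij : i < j) :
    σ.side i j m ^ 2 = 1 - (if m = i then 1 else 0) - (if m = j then 1 else 0) := by
  grind [side, IsLeft, mirror]

lemma imbalance_sq (hij : i < j) (hj : j < n) :
    σ.imbalance n i j ^ 2 =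
      n - 2 + 2 * ∑ f ∈ edges n, σ.side i j f.1 * σ.side i j f.2 := by
  rw [imbalance, sq_sum_range, sum_congr rfl fun m _ => side_sq hij]
  simp only [sum_sub_distrib, sum_const, card_range, sum_ite_eq', mem_range, hj, hij.trans hj,
    if_true, nsmul_eq_mul]
  ring

lemma sum_side_mul_side_quadruple (hσ : σ.Admissible n) {a b c d : ℕ} (hab : a < b) (hbc : b < c)
    (hcd : c < d) (hd : d < n) :
    σ.side a b c * σ.side a b d + σ.side a c b * σ.side a c d + σ.side a d b * σ.side a d c +
      σ.side b c a * σ.side b c d + σ.side b d a * σ.side b d c + σ.side c d a * σ.side c d b =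
    2 * σ.oddPairs a b c d := by
  have hac := hab.trans hbc
  have hbd := hbc.trans hcd
  obtain ⟨hR, hL⟩ := hσ a b c d hab hbc hcd hd
  simp only [side_of_mid hab hbc, side_of_mid hbc hcd, side_of_mid hab hbd, side_of_mid hac hcd,
    side_of_lt hab hbc, side_of_lt hbc hcd, side_of_lt hab hbd, side_of_lt hac hcd,
    side_of_gt hbc hab, side_of_gt hcd hbc, side_of_gt hbd hab, side_of_gt hcd hac, oddPairs]
  generalize σ a b c = p, σ a b d = q, σ a c d = r, σ b c d = s at *
  revert p q r s
  decide

lemma sum_side_mul_side (n : ℕ) :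
    ∑ e ∈ edges n, ∑ f ∈ edges n, σ.side e.1 e.2 f.1 * σ.side e.1 e.2 f.2 =
      ∑ p ∈ disjointPairs n, σ.side p.1.1 p.1.2 p.2.1 * σ.side p.1.1 p.1.2 p.2.2 := by
  rw [← sum_product', disjointPairs, sum_filter]
  refine sum_congr rfl fun p hp => ?_
  have hp := (mem_edges.1 (mem_product.1 hp).1).1
  grind [side_self_left, side_self_right]

theorem four_mul_oddCrossings (hσ : σ.Admissible n) :
    4 * (σ.oddCrossings n : ℤ) = ∑ e ∈ edges n, (σ.imbalance n e.1 e.2 ^ 2 - (n - 2)) := by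
  calc 4 * (σ.oddCrossings n : ℤ)
      = 2 * ∑ p ∈ disjointPairs n, σ.side p.1.1 p.1.2 p.2.1 * σ.side p.1.1 p.1.2 p.2.2 := by
        rw [sum_disjointPairs n fun e f => σ.side e.1 e.2 f.1 * σ.side e.1 e.2 f.2, oddCrossings,
          Nat.cast_sum, mul_sum, mul_sum]
        refine sum_congr rfl fun q hq => ?_
        obtain ⟨hab, hbc, hcd, hd⟩ := mem_quads.1 hq
        rw [sum_side_mul_side_quadruple hσ hab hbc hcd hd]
        ring
    _ = ∑ e ∈ edges n, (σ.imbalance n e.1 e.2 ^ 2 - (n - 2)) := by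
        rw [← sum_side_mul_side, mul_sum]
        refine sum_congr rfl fun e he => ?_
        rw [imbalance_sq (mem_edges.1 he).1 (mem_edges.1 he).2]
        ring

lemma leftCard_succ (σ : Signature) (n i j : ℕ) :
    σ.leftCard (n + 1) i j = σ.leftCard n i j + if σ.IsLeft i j n then 1 else 0 := by
  simp only [leftCard, card_filter, sum_range_succ]

lemma rightCard_succ (σ : Signature) (n i j : ℕ) :
    σ.rightCard (n + 1) i j = σ.rightCard n i j + if σ.mirror.IsLeft i j n then 1 else 0 :=
  leftCard_succ σ.mirror n i j

lemma imbalance_eq_leftCard_sub_rightCard :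
    σ.imbalance n i j = σ.leftCard n i j - σ.rightCard n i j := by
  simp [imbalance, side, leftCard, rightCard, sum_sub_distrib]

lemma leftCard_add_rightCard (hij : i < j) (hj : j < n) :
    σ.leftCard n i j + σ.rightCard n i j + 2 = n := by
  have left_eq : {m ∈ range n | σ.IsLeft i j m} =
      {m ∈ ((range n).erase i).erase j | σ.IsLeft i j m} := by
    ext m
    grind [IsLeft]
  have right_eq : {m ∈ range n | σ.mirror.IsLeft i j m} =
      {m ∈ ((range n).erase i).erase j | ¬ σ.IsLeft i j m} := by
    ext m
    simp only [mem_filter, mem_erase, isLeft_mirror_iff hij]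
    tauto
  rw [rightCard, leftCard, leftCard, left_eq, right_eq, card_filter_add_card_filter_not,
    card_erase_of_mem (by simp; omega), card_erase_of_mem (by simp; omega), card_range]
  omega

lemma isLeft_irrefl (hij : i < j) : ¬ σ.IsLeft i j j := by
  unfold IsLeft
  omega

lemma isLeft_or_isLeft {a b : ℕ} (ha : i < a) (hb : i < b) (hab : a ≠ b) :
    σ.IsLeft i a b ∨ σ.IsLeft i b a := by
  grind [IsLeft]

lemma Admissible.isLeft_trans (hσ : σ.Admissible n) {a b c : ℕ} (ha : i < a) (hb : i < b)
    (hc : i < c) (han : a < n) (hbn : b < n) (hcn : c < n) (hab : σ.IsLeft i a b)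
    (hbc : σ.IsLeft i b c) : σ.IsLeft i a c := by
  have adm := hσ i
  have := adm a b c
  have := adm a c b
  have := adm b a c
  have := adm b c a
  have := adm c a b
  have := adm c b a
  clear hσ adm
  unfold IsLeft at *
  have : a ≠ c := by rintro rfl; grind
  rcases lt_trichotomy a b with h | h | h <;> rcases lt_trichotomy b c with h' | h' | h' <;>
    rcases lt_or_gt_of_ne ‹a ≠ c› with h'' | h'' <;> grind

lemma Admissible.isLeft_trans_last (hσ : σ.Admissible (n + 1)) {a b c : ℕ} (ha : a < n)
    (hb : b < n) (hc : c < n) (hab : σ.IsLeft b n a) (hbc : σ.IsLeft c n b) :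
    σ.IsLeft c n a := by
  have adm (x y z : ℕ) (hxy : x < y) (hyz : y < z) (hz : z < n) :=
    hσ x y z n hxy hyz hz (lt_add_one n)
  have := adm a b c
  have := adm a c b
  have := adm b a c
  have := adm b c a
  have := adm c a b
  have := adm c b a
  clear hσ adm
  unfold IsLeft at *
  have : a ≠ c := by rintro rfl; grind
  rcases lt_trichotomy a b with h | h | h <;> rcases lt_trichotomy b c with h' | h' | h' <;>
    rcases lt_or_gt_of_ne ‹a ≠ c› with h'' | h'' <;> grind

/-- The number of `k`-edges with `k < K`, each counted with multiplicity `K - k`; this is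
`E_{≤≤K-1}` in the notation of `Sig.Elele`. -/
def weight (σ : Signature) (n K : ℕ) : ℕ :=
  ∑ e ∈ edges n, (K - min (σ.leftCard n e.1 e.2) (σ.rightCard n e.1 e.2))

/-- The edge `(i, j)` is a `k`-edge for the same `k ≤ K` with and without the vertex `n`. -/
def Invariant (σ : Signature) (n K i j : ℕ) : Prop :=
  (σ.IsLeft i j n ∧ σ.rightCard n i j ≤ K) ∨ (σ.mirror.IsLeft i j n ∧ σ.leftCard n i j ≤ K)

instance (σ : Signature) (n K i j : ℕ) : Decidable (σ.Invariant n K i j) := by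
  unfold Invariant; infer_instance

/-- The edges at the last vertex `n` have the ranks `0, …, n - 1` in the rotation there. -/
lemma sum_last_edges (hσ : σ.Admissible (n + 1)) {K : ℕ} (hK : 2 * K ≤ n) :
    ∑ i ∈ range n, (K - min (σ.leftCard (n + 1) i n) (σ.rightCard (n + 1) i n)) =
      K * (K + 1) := by
  have eq_rank (i : ℕ) (hi : i ∈ range n) :
      K - min (σ.leftCard (n + 1) i n) (σ.rightCard (n + 1) i n) =
        (fun x => K - min x (n - 1 - x)) #{m ∈ range n | σ.IsLeft i n m} := by
    have hi := mem_range.1 hi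
    have left := leftCard_succ σ n i n
    rw [if_neg (isLeft_irrefl hi)] at left
    have right : σ.rightCard (n + 1) i n = n - 1 - σ.leftCard n i n := by
      have := leftCard_add_rightCard (σ := σ) hi (lt_add_one n)
      omega
    rw [left, right, add_zero, leftCard]
  rw [sum_congr rfl eq_rank, sum_comp_rank (r := fun m i => σ.IsLeft i n m)
    (g := fun x => K - min x (n - 1 - x)), card_range, sum_range_tsub_min hK]
  · grind [IsLeft]
  · grind [IsLeft]
  · exact fun a ha b hb c hc =>
      hσ.isLeft_trans_last (mem_range.1 ha) (mem_range.1 hb) (mem_range.1 hc)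

/-- An edge preceding `(i, j)` in the rotation at `i` also has the vertex `n` on its left, so the
rank of `(i, j)` among these edges bounds the number of vertices after `i` on its right. -/
lemma min_le_card_isLeft_last (hσ : σ.Admissible (n + 1)) (hi : i < n) (K : ℕ) :
    min #{j ∈ range n | i < j ∧ σ.IsLeft i j n} (K + 1 - i) ≤
      #{j ∈ range n | i < j ∧ σ.IsLeft i j n ∧ σ.rightCard n i j ≤ K} := by
  set A := {j ∈ range n | i < j ∧ σ.IsLeft i j n} with hA
  have mem_A {j : ℕ} : j ∈ A ↔ j < n ∧ i < j ∧ σ.IsLeft i j n := by simp [hA]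
  have trans {a b c : ℕ} (ha : i < a) (hb : i < b) (hc : i < c) (han : a ≤ n) (hbn : b ≤ n)
      (hcn : c ≤ n) : σ.IsLeft i a b → σ.IsLeft i b c → σ.IsLeft i a c :=
    hσ.isLeft_trans ha hb hc (by omega) (by omega) (by omega)
  rw [← card_filter_rank_lt (r := fun m j => σ.IsLeft i m j)
    (fun a ha => isLeft_irrefl (mem_A.1 ha).2.1)
    (fun a ha b hb hab => isLeft_or_isLeft (mem_A.1 ha).2.1 (mem_A.1 hb).2.1 hab)
    (fun a ha b hb c hc => trans (mem_A.1 ha).2.1 (mem_A.1 hb).2.1 (mem_A.1 hc).2.1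
      (mem_A.1 ha).1.le (mem_A.1 hb).1.le (mem_A.1 hc).1.le) _]
  refine card_le_card fun j hj => ?_
  obtain ⟨hjA, hrank⟩ := mem_filter.1 hj
  obtain ⟨hjn, hij, hleft⟩ := mem_A.1 hjA
  have sub : {m ∈ range n | σ.mirror.IsLeft i j m} ⊆ range i ∪ {m ∈ A | σ.IsLeft i m j} := by
    intro m hm
    obtain ⟨hmn, hm⟩ := mem_filter.1 hm
    obtain ⟨hmi, hmj, hright⟩ := (isLeft_mirror_iff hij).1 hm
    rw [mem_range] at hmn
    rw [mem_union, mem_range, mem_filter, mem_A]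
    rcases lt_or_gt_of_ne hmi with hlt | him
    · exact Or.inl hlt
    · have hmj := (isLeft_or_isLeft him hij hmj).resolve_right hright
      exact Or.inr ⟨⟨hmn, him, trans him hij hi hmn.le hjn.le le_rfl hmj hleft⟩, hmj⟩
  have := (card_le_card sub).trans (card_union_le _ _)
  rw [card_range] at this
  rw [mem_filter, mem_range]
  exact ⟨hjn, hij, hleft, by rw [rightCard, leftCard]; omega⟩

lemma card_invariant (hσ : σ.Admissible (n + 1)) {K : ℕ} (hK : 2 * (K + 1) ≤ n) (hi : i < n) :
    K + 1 - i ≤ #{j ∈ range n | i < j ∧ σ.Invariant n K i j} := by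
  have left := min_le_card_isLeft_last hσ hi K
  have right := min_le_card_isLeft_last hσ.mirror hi K
  have total : #{j ∈ range n | i < j ∧ σ.IsLeft i j n} +
      #{j ∈ range n | i < j ∧ σ.mirror.IsLeft i j n} = n - 1 - i := by
    have left_eq : {j ∈ range n | i < j ∧ σ.IsLeft i j n} =
        {j ∈ Ioo i n | σ.IsLeft i j n} := by
      ext j
      grind
    have right_eq : {j ∈ range n | i < j ∧ σ.mirror.IsLeft i j n} =
        {j ∈ Ioo i n | ¬ σ.IsLeft i j n} := by
      ext j
      grind [isLeft_mirror_iff]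
    rw [left_eq, right_eq, card_filter_add_card_filter_not, Nat.card_Ioo]
    omega
  have split : {j ∈ range n | i < j ∧ σ.Invariant n K i j} =
      {j ∈ range n | i < j ∧ σ.IsLeft i j n ∧ σ.rightCard n i j ≤ K} ∪
        {j ∈ range n | i < j ∧ σ.mirror.IsLeft i j n ∧ σ.mirror.rightCard n i j ≤ K} := by
    ext j
    rw [mem_union, mem_filter, mem_filter, mem_filter, Invariant, rightCard, rightCard,
      mirror_mirror]
    tauto
  rw [split, card_union_of_disjoint]
  · omega
  · rw [disjoint_left]
    grind [isLeft_mirror_iff]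

lemma le_two_mul_card_invariant (hσ : σ.Admissible (n + 1)) {K : ℕ} (hK : 2 * (K + 1) ≤ n) :
    (K + 1) * (K + 2) ≤ 2 * #{e ∈ edges n | σ.Invariant n K e.1 e.2} := by
  rw [← two_mul_sum_range_tsub (show K + 1 ≤ n by omega)]
  gcongr
  calc ∑ i ∈ range n, (K + 1 - i)
      ≤ ∑ i ∈ range n, #{j ∈ range n | i < j ∧ σ.Invariant n K i j} :=
        sum_le_sum fun i hi => card_invariant hσ hK (mem_range.1 hi)
    _ = #{e ∈ edges n | σ.Invariant n K e.1 e.2} := by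
        simp only [edges, filter_filter, card_filter, sum_product]

/-- When the vertex `n` is added, every invariant edge gains one unit of weight and the edges at
the new vertex contribute `(K + 1) * (K + 2)`. -/
lemma weight_succ (hσ : σ.Admissible (n + 1)) {K : ℕ} (hK : 2 * (K + 1) ≤ n) :
    2 * σ.weight n K + 3 * ((K + 1) * (K + 2)) ≤ 2 * σ.weight (n + 1) (K + 1) := by
  have old_edges : σ.weight n K + #{e ∈ edges n | σ.Invariant n K e.1 e.2} ≤ ∑ e ∈ edges n,
      (K + 1 - min (σ.leftCard (n + 1) e.1 e.2) (σ.rightCard (n + 1) e.1 e.2)) := by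
    rw [weight, card_filter, ← sum_add_distrib]
    refine sum_le_sum fun e he => ?_
    obtain ⟨hij, hj⟩ := mem_edges.1 he
    have := leftCard_add_rightCard (σ := σ) hij hj
    have := isLeft_mirror_iff (σ := σ) (m := n) hij
    rw [leftCard_succ, rightCard_succ]
    grind [Invariant]
  have invariant := le_two_mul_card_invariant hσ hK
  rw [weight.eq_def _ (n + 1), sum_edges_succ, sum_last_edges hσ hK,
    show K + 1 + 1 = K + 2 from rfl]
  omega

theorem le_two_mul_weight (hσ : σ.Admissible n) {K : ℕ} (hK : 2 * K + 1 ≤ n) :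
    K * (K + 1) * (K + 2) ≤ 2 * σ.weight n K := by
  induction K generalizing n with
  | zero => simp
  | succ K ih =>
    obtain ⟨n, rfl⟩ := Nat.exists_eq_add_of_le' (show 1 ≤ n by omega)
    have := ih (hσ.mono n.le_succ) (by omega)
    have := weight_succ (K := K) hσ (by omega)
    nlinarith

lemma le_sum_weight (hσ : σ.Admissible n) {m : ℕ} (hm : 2 * m ≤ n + 1) :
    ((m : ℤ) - 1) * m * (m + 1) * (m + 2) ≤ 8 * (∑ K ∈ range m, σ.weight n K : ℕ) := by
  induction m with
  | zero => simp
  | succ m ih =>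
    have lower := ih (by omega)
    have step : (m : ℤ) * (m + 1) * (m + 2) ≤ 2 * (σ.weight n m : ℤ) := by
      exact_mod_cast le_two_mul_weight hσ (show 2 * m + 1 ≤ n by omega)
    rw [sum_range_succ]
    push_cast at *
    linarith

/-- The parity of `n` is absorbed by `(n - 1) / 2` and `n % 2`. -/
lemma imbalance_sq_eq_sum_tsub (hij : i < j) (hj : j < n) :
    σ.imbalance n i j ^ 2 =
      4 * (∑ K ∈ range (n / 2), (K - min (σ.leftCard n i j) (σ.rightCard n i j)) : ℕ) +
      4 * (∑ K ∈ range ((n - 1) / 2), (K - min (σ.leftCard n i j) (σ.rightCard n i j)) : ℕ) +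
      (n % 2 : ℕ) := by
  have total := leftCard_add_rightCard (σ := σ) hij hj
  rw [imbalance_eq_leftCard_sub_rightCard]
  generalize σ.leftCard n i j = l at *
  generalize σ.rightCard n i j = r at *
  have upper := two_mul_sum_range_sub_tsub (m := n / 2) (μ := min l r)
  have lower := two_mul_sum_range_sub_tsub (m := (n - 1) / 2) (μ := min l r)
  obtain ⟨δ, hδ⟩ : ∃ δ, δ = n / 2 - 1 - min l r := ⟨_, rfl⟩
  have sq_eq : ((l : ℤ) - r) ^ 2 = (2 * δ + (n % 2 : ℕ)) ^ 2 := by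
    rw [sq_eq_sq_iff_eq_or_eq_neg]
    omega
  rw [← hδ] at upper
  rw [sq_eq]
  clear sq_eq
  zify at upper
  rcases Nat.mod_two_eq_zero_or_one n with h | h
  · rw [show (n - 1) / 2 - 1 - min l r = δ - 1 by omega] at lower
    clear hδ
    rcases δ with _ | δ
    · rw [Nat.zero_sub, zero_mul] at lower
      zify at lower
      push_cast [h] at *
      linarith
    · rw [Nat.add_sub_cancel] at lower
      zify at lower
      push_cast [h] at *
      linarith
  · rw [show (n - 1) / 2 - 1 - min l r = δ by omega] at lower
    zify at lower
    push_cast [h] at *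
    linarith

lemma sum_imbalance_sq (σ : Signature) (n : ℕ) :
    ∑ e ∈ edges n, σ.imbalance n e.1 e.2 ^ 2 =
      4 * (∑ K ∈ range (n / 2), σ.weight n K : ℕ) +
      4 * (∑ K ∈ range ((n - 1) / 2), σ.weight n K : ℕ) + #(edges n) * (n % 2 : ℕ) := by
  rw [sum_congr rfl fun e he => imbalance_sq_eq_sum_tsub (mem_edges.1 he).1 (mem_edges.1 he).2]
  simp only [weight, sum_add_distrib, ← mul_sum, sum_const, nsmul_eq_mul]
  rw [sum_comm, sum_comm (s := range ((n - 1) / 2))]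
  push_cast
  rfl

end Signature

lemma four_mul_Zval_two_mul (m : ℕ) :
    4 * (Zval (2 * m) : ℤ) = m * (m - 1) * (m - 1) * (m - 2) := by
  rcases m with _ | _ | m
  · simp [Zval]
  · simp [Zval]
  · obtain ⟨a, ha⟩ := (Nat.even_mul_succ_self m).two_dvd
    obtain ⟨b, hb⟩ := (Nat.even_mul_succ_self (m + 1)).two_dvd
    have four_dvd : 4 ∣ (m + 2) * (m + 1) * (m + 1) * m :=
      ⟨a * b, by linear_combination (m + 1) * (m + 2) * ha + 2 * a * hb⟩
    have : Zval (2 * (m + 2)) = (m + 2) * (m + 1) * (m + 1) * m / 4 := by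
      rw [Zval]
      congr 4 <;> omega
    rw [this, Int.natCast_div, Nat.cast_ofNat, Int.mul_ediv_cancel' (mod_cast four_dvd)]
    push_cast
    ring

lemma four_mul_Zval_two_mul_add_one (m : ℕ) :
    4 * (Zval (2 * m + 1) : ℤ) = m * m * (m - 1) * (m - 1) := by
  rcases m with _ | m
  · simp [Zval]
  · obtain ⟨a, ha⟩ := (Nat.even_mul_succ_self m).two_dvd
    have four_dvd : 4 ∣ (m + 1) * (m + 1) * m * m :=
      ⟨a * a, by linear_combination (m * (m + 1) + 2 * a) * ha⟩
    have : Zval (2 * (m + 1) + 1) = (m + 1) * (m + 1) * m * m / 4 := by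
      rw [Zval]
      congr 4 <;> omega
    rw [this, Int.natCast_div, Nat.cast_ofNat, Int.mul_ediv_cancel' (mod_cast four_dvd)]
    push_cast
    ring

theorem Signature.Admissible.Zval_le_oddCrossings {σ : Signature} {n : ℕ} (hσ : σ.Admissible n) :
    Zval n ≤ σ.oddCrossings n := by
  have four_mul := Signature.four_mul_oddCrossings hσ
  rw [sum_sub_distrib, Signature.sum_imbalance_sq, sum_const, nsmul_eq_mul] at four_mul
  have upper := Signature.le_sum_weight hσ (m := n / 2) (by omega)
  have lower := Signature.le_sum_weight hσ (m := (n - 1) / 2) (by omega)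
  have edges_card := two_mul_card_edges n
  zify
  obtain ⟨m, rfl | rfl⟩ := Nat.even_or_odd' n
  · have hill := four_mul_Zval_two_mul m
    rcases m with _ | m
    · simp [Zval]
    rw [show 2 * (m + 1) / 2 = m + 1 by omega, show 2 * (m + 1) % 2 = 0 by omega,
      show (2 * (m + 1) - 1) / 2 = m by omega] at *
    push_cast at *
    nlinarith
  · have hill := four_mul_Zval_two_mul_add_one m
    rw [show (2 * m + 1) / 2 = m by omega, show (2 * m + 1) % 2 = 1 by omega,
      show (2 * m + 1 - 1) / 2 = m by omega] at *
    push_cast at *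
    nlinarith

end Signature

section Inversions

variable {ι α β : Type*} [LinearOrder α] [LinearOrder β]

/-- The functions `u` and `v` order `e` and `f` in opposite ways. -/
def Inverted (u : ι → α) (v : ι → β) (e f : ι) : Prop :=
  (u e < u f ∧ v f < v e) ∨ (u f < u e ∧ v e < v f)

instance (u : ι → α) (v : ι → β) (e f : ι) : Decidable (Inverted u v e f) := by
  unfold Inverted; infer_instance

/-- The number of ordered pairs of elements of `S` inverted between `u` and `v`. -/
def inversionCount (S : Finset ι) (u : ι → α) (v : ι → β) : ℕ :=
  #{p ∈ S ×ˢ S | Inverted u v p.1 p.2}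

variable {S : Finset ι} {u : ι → α} {v : ι → β} {a b e f : ι}

lemma Inverted.symm (h : Inverted u v e f) : Inverted u v f e := Or.symm h

lemma inverted_comm : Inverted u v e f ↔ Inverted v u e f := by
  grind [Inverted]

lemma inversionCount_comm : inversionCount S u v = inversionCount S v u := by
  simp only [inversionCount, inverted_comm (u := u)]

lemma Inverted.ne (h : Inverted u v e f) : e ≠ f := by
  grind [Inverted]

variable [DecidableEq ι]

lemma swap_mem_iff (h : a ∈ S ↔ b ∈ S) : Equiv.swap a b e ∈ S ↔ e ∈ S := by
  grind

lemma inversionCount_comp_swap (h : a ∈ S ↔ b ∈ S) (u : ι → α) (v : ι → β) :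
    inversionCount S (u ∘ Equiv.swap a b) (v ∘ Equiv.swap a b) = inversionCount S u v := by
  refine card_equiv ((Equiv.swap a b).prodCongr (Equiv.swap a b)) fun p => ?_
  simp only [mem_filter, mem_product, Equiv.prodCongr_apply, Prod.map_fst, Prod.map_snd,
    swap_mem_iff h]
  rfl

lemma inverted_swap_add_le (hab : Inverted u v a b) (e f : ι) :
    (if Inverted u (v ∘ Equiv.swap a b) e f then 1 else 0) +
      (if Inverted (u ∘ Equiv.swap a b) v e f then 1 else 0) ≤
    (if Inverted u v e f then 1 else 0) +
      (if Inverted (u ∘ Equiv.swap a b) (v ∘ Equiv.swap a b) e f then 1 else 0) := by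
  simp only [Inverted, Function.comp_apply, Equiv.swap_apply_def] at hab ⊢
  grind (splits := 40)

/-- Reindexing by the swap shows that exchanging `a` and `b` in `v` alone has the same effect as
exchanging them in `u` alone. -/
lemma inversionCount_swap_lt (ha : a ∈ S) (hb : b ∈ S) (hab : Inverted u v a b) :
    inversionCount S u (v ∘ Equiv.swap a b) < inversionCount S u v := by
  have swap_left : inversionCount S (u ∘ Equiv.swap a b) v =
      inversionCount S u (v ∘ Equiv.swap a b) := by
    rw [← inversionCount_comp_swap (iff_of_true ha hb)]
    simp [Function.comp_def]
  have swap_both := inversionCount_comp_swap (iff_of_true ha hb) u v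
  have strict := sum_lt_sum (s := S ×ˢ S) (fun p _ => inverted_swap_add_le hab p.1 p.2)
    ⟨(a, b), mk_mem_product ha hb, by
      simp only [Inverted, Function.comp_apply, Equiv.swap_apply_left,
        Equiv.swap_apply_right] at hab ⊢
      grind⟩
  simp only [sum_add_distrib, ← card_filter] at strict
  unfold inversionCount at *
  omega

end Inversions

section HeightSystems

/-- The edge `e` meets the vertical line through the vertex `m`. -/
def Active (e : ℕ × ℕ) (m : ℕ) : Prop := e.1 ≤ m ∧ m ≤ e.2

/-- The vertex `m` is an endpoint of `e`. -/
def IsEnd (e : ℕ × ℕ) (m : ℕ) : Prop := m = e.1 ∨ m = e.2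

/-- The edges of `K n` which pass through the slab between the vertices `m` and `m + 1`. -/
def slabEdges (n m : ℕ) : Finset (ℕ × ℕ) := {e ∈ edges n | e.1 ≤ m ∧ m < e.2}

/-- The heights `h e m` of the edges `e` of `K n` above the vertices `m` (the values at the other
vertices being irrelevant), as in a drawing in which edges meet above a vertex only if they end
there. -/
structure IsHeightSystem (n : ℕ) (h : ℕ × ℕ → ℕ → ℝ) : Prop where
  eq_zero : ∀ e ∈ edges n, ∀ m, IsEnd e m → h e m = 0
  isEnd_of_eq : ∀ e ∈ edges n, ∀ f ∈ edges n, e ≠ f → ∀ m, Active e m → Active f m →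
    h e m = h f m → IsEnd e m ∧ IsEnd f m

/-- The edges `e` and `f` change their vertical order in the slab from `m` to `m + 1`. -/
def SlabInverted (n : ℕ) (h : ℕ × ℕ → ℕ → ℝ) (m : ℕ) (e f : ℕ × ℕ) : Prop :=
  e ∈ slabEdges n m ∧ f ∈ slabEdges n m ∧ Inverted (h · m) (h · (m + 1)) e f

noncomputable instance (n : ℕ) (h : ℕ × ℕ → ℕ → ℝ) (m : ℕ) (e f : ℕ × ℕ) :
    Decidable (SlabInverted n h m e f) := by
  unfold SlabInverted; infer_instance

/-- The number of slabs in which `e` and `f` change their vertical order. -/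
noncomputable def edgeInversions (n : ℕ) (h : ℕ × ℕ → ℕ → ℝ) (e f : ℕ × ℕ) : ℕ :=
  #{m ∈ range n | SlabInverted n h m e f}

/-- The number of changes of the vertical order in all slabs, for ordered pairs of edges. -/
noncomputable def totalInversions (n : ℕ) (h : ℕ × ℕ → ℕ → ℝ) : ℕ :=
  ∑ m ∈ range n, inversionCount (slabEdges n m) (h · m) (h · (m + 1))

/-- Edges with a common left end, or with a common right end, do not change their order. -/
def NoAdjacentInversions (n : ℕ) (h : ℕ × ℕ → ℕ → ℝ) : Prop :=
  ∀ e f : ℕ × ℕ, e.1 = f.1 ∨ e.2 = f.2 → ∀ m, ¬ SlabInverted n h m e f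

variable {n s m : ℕ} {h : ℕ × ℕ → ℕ → ℝ} {P : ℕ → Prop} {e f : ℕ × ℕ}

lemma mem_slabEdges : e ∈ slabEdges n m ↔ e ∈ edges n ∧ Active e m ∧ Active e (m + 1) := by
  simp only [slabEdges, mem_filter, mem_edges, Active]
  omega

lemma SlabInverted.symm (hef : SlabInverted n h m e f) : SlabInverted n h m f e :=
  ⟨hef.2.1, hef.1, hef.2.2.symm⟩

lemma edgeInversions_pos (hef : ∃ m, SlabInverted n h m e f) : 0 < edgeInversions n h e f := by
  obtain ⟨m, hm⟩ := hef
  refine card_pos.2 ⟨m, mem_filter.2 ⟨mem_range.2 ?_, hm⟩⟩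
  have := mem_slabEdges.1 hm.1
  grind [mem_edges, Active]

lemma totalInversions_eq_sum (n : ℕ) (h : ℕ × ℕ → ℕ → ℝ) :
    totalInversions n h = ∑ p ∈ edges n ×ˢ edges n, edgeInversions n h p.1 p.2 := by
  have slab (m : ℕ) : inversionCount (slabEdges n m) (h · m) (h · (m + 1)) =
      #{p ∈ edges n ×ˢ edges n | SlabInverted n h m p.1 p.2} := by
    refine congrArg card ?_
    ext p
    simp only [mem_filter, mem_product, SlabInverted, slabEdges]
    tauto
  simp only [totalInversions, edgeInversions, slab, card_filter]
  exact sum_comm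

open Classical in
/-- The heights after exchanging the edges `e` and `f` above the vertices satisfying `P`. -/
noncomputable def swapOn (P : ℕ → Prop) (e f : ℕ × ℕ) (h : ℕ × ℕ → ℕ → ℝ) : ℕ × ℕ → ℕ → ℝ :=
  fun g m => if P m then h (Equiv.swap e f g) m else h g m

lemma swapOn_of_pos (hm : P m) : (swapOn P e f h · m) = (h · m) ∘ Equiv.swap e f := by
  funext g
  simp [swapOn, hm]

lemma swapOn_of_neg (hm : ¬ P m) : (swapOn P e f h · m) = (h · m) := by
  funext g
  simp [swapOn, hm]

lemma IsHeightSystem.swapOn (hh : IsHeightSystem n h) (he : e ∈ edges n) (hf : f ∈ edges n)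
    (hP : ∀ m, P m → (Active e m ↔ Active f m) ∧ (IsEnd e m ↔ IsEnd f m)) :
    IsHeightSystem n (swapOn P e f h) := by
  have swap_mem (g) : Equiv.swap e f g ∈ edges n ↔ g ∈ edges n := swap_mem_iff (iff_of_true he hf)
  have active_swap {m} (hm : P m) (g) : Active (Equiv.swap e f g) m ↔ Active g m := by grind
  have isEnd_swap {m} (hm : P m) (g) : IsEnd (Equiv.swap e f g) m ↔ IsEnd g m := by grind
  refine ⟨fun g hg m hgm => ?_, fun g hg k hk hgk m hgm hkm => ?_⟩ <;> by_cases hm : P m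
  · simpa only [MonotoneKn.swapOn, hm, if_true] using
      hh.eq_zero _ ((swap_mem g).2 hg) m ((isEnd_swap hm g).2 hgm)
  · simpa only [MonotoneKn.swapOn, hm, if_false] using hh.eq_zero g hg m hgm
  · simpa only [MonotoneKn.swapOn, hm, if_true, isEnd_swap hm] using
      hh.isEnd_of_eq _ ((swap_mem g).2 hg) _ ((swap_mem k).2 hk) ((Equiv.swap e f).injective.ne hgk)
        m ((active_swap hm g).2 hgm) ((active_swap hm k).2 hkm)
  · simpa only [MonotoneKn.swapOn, hm, if_false] using hh.isEnd_of_eq g hg k hk hgk m hgm hkm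

lemma totalInversions_swapOn_lt (hef : SlabInverted n h s e f)
    (hP : ∀ m, P m → (Active e m ↔ Active f m))
    (hPs : ∀ m, m ≠ s → (P m ↔ P (m + 1))) (hs : P s ↔ ¬ P (s + 1)) :
    totalInversions n (swapOn P e f h) < totalInversions n h := by
  obtain ⟨he, hf, inverted⟩ := hef
  have lt_at : inversionCount (slabEdges n s) (swapOn P e f h · s) (swapOn P e f h · (s + 1)) <
      inversionCount (slabEdges n s) (h · s) (h · (s + 1)) := by
    by_cases hPs' : P s
    · rw [swapOn_of_pos hPs', swapOn_of_neg (hs.1 hPs'), inversionCount_comm,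
        inversionCount_comm (u := (h · s))]
      exact inversionCount_swap_lt he hf (inverted_comm.1 inverted)
    · rw [swapOn_of_neg hPs', swapOn_of_pos (by tauto)]
      exact inversionCount_swap_lt he hf inverted
  have eq_of_ne (m) (hm : m ≠ s) :
      inversionCount (slabEdges n m) (swapOn P e f h · m) (swapOn P e f h · (m + 1)) =
        inversionCount (slabEdges n m) (h · m) (h · (m + 1)) := by
    by_cases hPm : P m
    · have hPm' := (hPs m hm).1 hPm
      rw [swapOn_of_pos hPm, swapOn_of_pos hPm', inversionCount_comp_swap]
      simp only [mem_slabEdges, (mem_slabEdges.1 he).1, (mem_slabEdges.1 hf).1, hP m hPm,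
        hP _ hPm']
    · rw [swapOn_of_neg hPm, swapOn_of_neg (mt (hPs m hm).2 hPm)]
  refine sum_lt_sum (fun m _ => ?_) ⟨s, ?_, lt_at⟩
  · rcases eq_or_ne m s with rfl | hm
    exacts [lt_at.le, (eq_of_ne m hm).le]
  · grind [mem_slabEdges, mem_edges, Active]

lemma exists_swapOn_lt (hh : IsHeightSystem n h) (hadj : e.1 = f.1 ∨ e.2 = f.2)
    (hef : SlabInverted n h s e f) :
    ∃ h', IsHeightSystem n h' ∧ totalInversions n h' < totalInversions n h := by
  have he := mem_slabEdges.1 hef.1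
  have hf := mem_slabEdges.1 hef.2.1
  unfold Active at he hf
  rcases hadj with left | right
  · have hP (m) (hm : m ≤ s) : (Active e m ↔ Active f m) ∧ (IsEnd e m ↔ IsEnd f m) := by
      unfold Active IsEnd
      omega
    exact ⟨swapOn (· ≤ s) e f h, hh.swapOn he.1 hf.1 hP,
      totalInversions_swapOn_lt hef (fun m hm => (hP m hm).1) (by omega) (by omega)⟩
  · have hP (m) (hm : s < m) : (Active e m ↔ Active f m) ∧ (IsEnd e m ↔ IsEnd f m) := by
      unfold Active IsEnd
      omega
    exact ⟨swapOn (s < ·) e f h, hh.swapOn he.1 hf.1 hP,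
      totalInversions_swapOn_lt hef (fun m hm => (hP m hm).1) (by omega) (by omega)⟩

theorem IsHeightSystem.exists_noAdjacentInversions (hh : IsHeightSystem n h) :
    ∃ h', IsHeightSystem n h' ∧ totalInversions n h' ≤ totalInversions n h ∧
      NoAdjacentInversions n h' := by
  induction hN : totalInversions n h using Nat.strong_induction_on generalizing h with
  | _ N ih =>
    by_cases hgood : NoAdjacentInversions n h
    · exact ⟨h, hh, hN.le, hgood⟩
    · unfold NoAdjacentInversions at hgood
      push Not at hgood
      obtain ⟨e, f, hadj, s, hef⟩ := hgood
      obtain ⟨h', hh', hlt⟩ := exists_swapOn_lt hh hadj hef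
      obtain ⟨h'', hh'', hle, hgood⟩ := ih _ (hN ▸ hlt) hh' rfl
      exact ⟨h'', hh'', by omega, hgood⟩

namespace IsHeightSystem

lemma ne_zero (hh : IsHeightSystem n h) {i m j : ℕ} (him : i < m) (hmj : m < j) (hj : j < n) :
    h (i, j) m ≠ 0 := by
  intro h0
  have := hh.isEnd_of_eq (i, j) (by grind [mem_edges]) (i, m) (by grind [mem_edges]) (by grind) m
    (by grind [Active]) (by grind [Active])
    (h0.trans (hh.eq_zero (i, m) (by grind [mem_edges]) m (Or.inr rfl)).symm)
  grind [IsEnd]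

lemma lt_iff_lt (hh : IsHeightSystem n h) (he : e ∈ edges n) (hf : f ∈ edges n) (hef : e ≠ f)
    (hno : ∀ m, ¬ SlabInverted n h m e f) {p q : ℕ} (hpq : p ≤ q) (hep : e.1 ≤ p) (hfp : f.1 ≤ p)
    (heq : q ≤ e.2) (hfq : q ≤ f.2) (hend : ∀ m, p ≤ m → m ≤ q → ¬ (IsEnd e m ∧ IsEnd f m)) :
    h f p < h e p ↔ h f q < h e q := by
  have ne (m) (hpm : p ≤ m) (hmq : m ≤ q) : h e m ≠ h f m := fun heq => hend m hpm hmq <|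
    hh.isEnd_of_eq e he f hf hef m ⟨by omega, by omega⟩ ⟨by omega, by omega⟩ heq
  induction q, hpq using Nat.le_induction with
  | base => rfl
  | succ q hpq ih =>
    refine (ih (by omega) (by omega) (by grind) (by grind)).trans ?_
    have := hno q
    grind [SlabInverted, Inverted, mem_slabEdges, Active]

end IsHeightSystem

/-- The signature of a system of heights. -/
noncomputable def signature (h : ℕ × ℕ → ℕ → ℝ) : Signature := fun i m j => decide (0 < h (i, j) m)

variable {a b c d : ℕ}

lemma lt_or_lt_at_left (hh : IsHeightSystem n h) (hno : NoAdjacentInversions n h) (hab : a < b)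
    (hbc : b < c) (hc : c < n) :
    if signature h a b c then h (a, b) (a + 1) < h (a, c) (a + 1)
      else h (a, c) (a + 1) < h (a, b) (a + 1) := by
  have he : (a, c) ∈ edges n := by grind [mem_edges]
  have hf : (a, b) ∈ edges n := by grind [mem_edges]
  have order := hh.lt_iff_lt he hf (by grind) (hno _ _ (Or.inl rfl)) (show a + 1 ≤ b by omega)
    (by simp) (by simp) hbc.le le_rfl (by grind [IsEnd])
  have ne := hh.isEnd_of_eq _ he _ hf (by grind) (a + 1)
  rw [hh.eq_zero _ hf b (Or.inr rfl)] at order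
  grind [signature, IsEnd, Active]

lemma lt_or_lt_at_right (hh : IsHeightSystem n h) (hno : NoAdjacentInversions n h) (hab : a < b)
    (hbc : b < c) (hc : c < n) :
    if signature h a b c then h (b, c) (c - 1) < h (a, c) (c - 1)
      else h (a, c) (c - 1) < h (b, c) (c - 1) := by
  have he : (a, c) ∈ edges n := by grind [mem_edges]
  have hf : (b, c) ∈ edges n := by grind [mem_edges]
  have order := hh.lt_iff_lt he hf (by grind) (hno _ _ (Or.inr rfl)) (show b ≤ c - 1 by omega)
    hab.le le_rfl (by simp) (by simp) (by grind [IsEnd])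
  have ne := hh.isEnd_of_eq _ he _ hf (by grind) (c - 1)
  rw [hh.eq_zero _ hf b (Or.inl rfl)] at order
  grind [signature, IsEnd, Active]

/-- The vertical order of the edges just after `a` and just before `d` is transitive. -/
theorem admissible_signature (hh : IsHeightSystem n h) (hno : NoAdjacentInversions n h) :
    (signature h).Admissible n := by
  intro a b c d hab hbc hcd hd
  have left_abc := lt_or_lt_at_left hh hno hab hbc (by omega)
  have left_acd := lt_or_lt_at_left hh hno (hab.trans hbc) hcd hd
  have left_abd := lt_or_lt_at_left hh hno hab (hbc.trans hcd) hd
  have right_abd := lt_or_lt_at_right hh hno hab (hbc.trans hcd) hd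
  have right_bcd := lt_or_lt_at_right hh hno hbc hcd hd
  have right_acd := lt_or_lt_at_right hh hno (hab.trans hbc) hcd hd
  grind

lemma exists_slabInverted_of_eq (hh : IsHeightSystem n h) (hab : a < b) (hbc : b < c) (hcd : c < d)
    (hd : d < n) (hσ : signature h a b c = signature h b c d) :
    ∃ m, SlabInverted n h m (a, c) (b, d) := by
  by_contra! hno
  have he : (a, c) ∈ edges n := by grind [mem_edges]
  have hf : (b, d) ∈ edges n := by grind [mem_edges]
  have order := hh.lt_iff_lt he hf (by grind) hno hbc.le hab.le le_rfl le_rfl hcd.le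
    (by grind [IsEnd])
  rw [hh.eq_zero _ hf b (Or.inl rfl), hh.eq_zero _ he c (Or.inr rfl)] at order
  have := hh.ne_zero hbc hcd hd
  grind [signature]

lemma exists_slabInverted_of_ne (hh : IsHeightSystem n h) (hab : a < b) (hbc : b < c) (hcd : c < d)
    (hd : d < n) (hσ : signature h a b d ≠ signature h a c d) :
    ∃ m, SlabInverted n h m (a, d) (b, c) := by
  by_contra! hno
  have he : (a, d) ∈ edges n := by grind [mem_edges]
  have hf : (b, c) ∈ edges n := by grind [mem_edges]
  have order := hh.lt_iff_lt he hf (by grind) hno hbc.le hab.le le_rfl hcd.le le_rfl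
    (by grind [IsEnd])
  rw [hh.eq_zero _ hf b (Or.inl rfl), hh.eq_zero _ hf c (Or.inr rfl)] at order
  grind [signature]

theorem two_mul_oddCrossings_le_totalInversions (hh : IsHeightSystem n h) :
    2 * (signature h).oddCrossings n ≤ totalInversions n h := by
  have disjoint_subset : disjointPairs n ⊆ edges n ×ˢ edges n := filter_subset _ _
  rw [totalInversions_eq_sum, Signature.oddCrossings, mul_sum]
  refine le_trans ?_ (sum_le_sum_of_subset disjoint_subset)
  rw [sum_disjointPairs n (edgeInversions n h)]
  refine sum_le_sum fun ⟨⟨a, b⟩, c, d⟩ hq => ?_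
  obtain ⟨hab, hbc, hcd, hd⟩ := mem_quads.1 hq
  have of_eq := exists_slabInverted_of_eq hh hab hbc hcd hd
  have of_ne := exists_slabInverted_of_ne hh hab hbc hcd hd
  have ac_bd := fun hσ => edgeInversions_pos (of_eq hσ)
  have bd_ac := fun hσ => edgeInversions_pos ((of_eq hσ).imp fun _ => SlabInverted.symm)
  have ad_bc := fun hσ => edgeInversions_pos (of_ne hσ)
  have bc_ad := fun hσ => edgeInversions_pos ((of_ne hσ).imp fun _ => SlabInverted.symm)
  grind [Signature.oddPairs]

theorem IsHeightSystem.two_mul_Zval_le_totalInversions (hh : IsHeightSystem n h) :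
    2 * Zval n ≤ totalInversions n h := by
  obtain ⟨h', hh', hle, hno⟩ := hh.exists_noAdjacentInversions
  have hill := (admissible_signature hh' hno).Zval_le_oddCrossings
  have odd := two_mul_oddCrossings_le_totalInversions hh'
  omega

end HeightSystems

section Drawing

open Filter Topology

/-- Points in pairwise disjoint intervals are distinct. -/
lemma card_le_ncard_of_forall_exists_mem_Ioo {A : Finset ℕ} {τ : ℕ → ℝ} {C : Set ℝ}
    (hC : C.Finite) (hτ : ∀ m ∈ A, ∀ m' ∈ A, m < m' → τ (m + 1) ≤ τ m')
    (h : ∀ m ∈ A, ∃ t ∈ C, τ m < t ∧ t < τ (m + 1)) : #A ≤ C.ncard := by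
  choose! t mem lt gt using h
  have strictMono : StrictMonoOn t A := fun m hm m' hm' hmm =>
    (gt m hm).trans_le ((hτ m hm m' hm' hmm).trans (lt m' hm').le)
  rw [← Set.ncard_coe_finset]
  exact Set.ncard_le_ncard_of_injOn t mem strictMono.injOn hC

variable {n : ℕ} [NeZero n] (D : XMonotoneDrawing n) {i j m : ℕ} {e f : ℕ × ℕ}

/-- The abscissa of the vertex `m < n`. -/
def abscissa (m : ℕ) : ℝ := D.x (Fin.ofNat n m)

/-- The height of the edge `e` of `K n` above the abscissa `t`. -/
def height (e : ℕ × ℕ) (t : ℝ) : ℝ := D.e (Fin.ofNat n e.1) (Fin.ofNat n e.2) t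

/-- The parameters at which the edges `e` and `f` of `K n` cross. -/
def crossings (e f : ℕ × ℕ) : Set ℝ :=
  D.crossSet (Fin.ofNat n e.1) (Fin.ofNat n e.2) (Fin.ofNat n f.1) (Fin.ofNat n f.2)

lemma ofNat_lt_ofNat (hij : i < j) (hj : j < n) : Fin.ofNat n i < Fin.ofNat n j := by
  simp [Fin.lt_def, Nat.mod_eq_of_lt hj, Nat.mod_eq_of_lt (hij.trans hj), hij]

lemma ofNat_fst_lt_ofNat_snd (he : e ∈ edges n) : Fin.ofNat n e.1 < Fin.ofNat n e.2 :=
  ofNat_lt_ofNat (mem_edges.1 he).1 (mem_edges.1 he).2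

lemma ofNat_pair_ne (he : e ∈ edges n) (hf : f ∈ edges n) (hef : e ≠ f) :
    (Fin.ofNat n e.1, Fin.ofNat n e.2) ≠ (Fin.ofNat n f.1, Fin.ofNat n f.2) := by
  rw [mem_edges] at he hf
  intro h
  simp only [Prod.mk.injEq, Fin.ext_iff, Fin.val_ofNat] at h
  rw [Nat.mod_eq_of_lt he.2, Nat.mod_eq_of_lt hf.2, Nat.mod_eq_of_lt (he.1.trans he.2),
    Nat.mod_eq_of_lt (hf.1.trans hf.2)] at h
  exact hef (Prod.ext h.1 h.2)

lemma abscissa_lt (hij : i < j) (hj : j < n) : abscissa D i < abscissa D j :=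
  D.x_strictMono (ofNat_lt_ofNat hij hj)

lemma abscissa_le (hij : i ≤ j) (hj : j < n) : abscissa D i ≤ abscissa D j := by
  rcases hij.eq_or_lt with rfl | h
  exacts [le_rfl, (abscissa_lt D h hj).le]

lemma continuousOn_height (he : e ∈ edges n) :
    ContinuousOn (height D e) (Set.Icc (abscissa D e.1) (abscissa D e.2)) :=
  D.cont _ _ (ofNat_fst_lt_ofNat_snd he)

lemma height_of_isEnd (he : e ∈ edges n) (hm : IsEnd e m) : height D e (abscissa D m) = 0 := by
  rcases hm with rfl | rfl
  · exact D.end_left _ _ (ofNat_fst_lt_ofNat_snd he)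
  · exact D.end_right _ _ (ofNat_fst_lt_ofNat_snd he)

lemma finite_crossings (he : e ∈ edges n) (hf : f ∈ edges n) (hef : e ≠ f) :
    (crossings D e f).Finite :=
  D.cross_finite _ _ _ _ (ofNat_fst_lt_ofNat_snd he) (ofNat_fst_lt_ofNat_snd hf)
    (ofNat_pair_ne he hf hef)

lemma mem_crossings {t : ℝ} : t ∈ crossings D e f ↔
    max (abscissa D e.1) (abscissa D f.1) < t ∧ t < min (abscissa D e.2) (abscissa D f.2) ∧
      height D e t = height D f t := Iff.rfl

lemma cr_eq_sum_crossings :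
    D.cr = (∑ p ∈ edges n ×ˢ edges n with p.1 ≠ p.2, (crossings D p.1 p.2).ncard) / 2 := by
  unfold XMonotoneDrawing.cr
  rw [← sum_filter]
  congr 1
  refine sum_nbij' (fun p => ((p.1.1.1, p.1.2.1), (p.2.1.1, p.2.2.1)))
    (fun p => ((Fin.ofNat n p.1.1, Fin.ofNat n p.1.2), (Fin.ofNat n p.2.1, Fin.ofNat n p.2.2)))
    (fun p hp => ?_) (fun p hp => ?_) (fun p _ => ?_) (fun p hp => ?_) (fun p _ => ?_)
  · simp only [mem_filter_univ, Fin.lt_def, ne_eq, Prod.ext_iff, Fin.ext_iff] at hp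
    simp only [mem_filter, mem_product, mem_edges, ne_eq, Prod.ext_iff]
    exact ⟨⟨⟨hp.1, p.1.2.2⟩, hp.2.1, p.2.2.2⟩, hp.2.2⟩
  · simp only [mem_filter, mem_product] at hp
    exact mem_filter.2 ⟨mem_univ _, ofNat_fst_lt_ofNat_snd hp.1.1, ofNat_fst_lt_ofNat_snd hp.1.2,
      ofNat_pair_ne hp.1.1 hp.1.2 hp.2⟩
  · simp
  · simp only [mem_filter, mem_product, mem_edges] at hp
    simp only [Fin.val_ofNat, Prod.ext_iff]
    refine ⟨⟨?_, ?_⟩, ?_, ?_⟩ <;> apply Nat.mod_eq_of_lt <;> omega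
  · simp [crossings, XMonotoneDrawing.crossCount]

lemma eventually_height_mul_pos (he : e ∈ edges n) (hem : e.1 < m) (hme : m < e.2) :
    ∀ᶠ y in 𝓝[>] (abscissa D m), 0 < height D e (abscissa D m) * height D e y := by
  have he2 := (mem_edges.1 he).2
  have ne : height D e (abscissa D m) ≠ 0 :=
    D.avoid_vertex _ _ _ (ofNat_lt_ofNat hem (hme.trans he2)) (ofNat_lt_ofNat hme he2)
  have cont : ContinuousAt (height D e) (abscissa D m) := (continuousOn_height D he).continuousAt
    (Icc_mem_nhds (abscissa_lt D hem (hme.trans he2)) (abscissa_lt D hme he2))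
  exact ((cont.const_mul (height D e (abscissa D m))).eventually
    (lt_mem_nhds (mul_self_pos.2 ne))).filter_mono nhdsWithin_le_nhds

lemma eventually_height_ne (he : e ∈ edges n) (hf : f ∈ edges n) (hef : e ≠ f) (hem : e.1 < m)
    (hme : m < e.2) (hfm : f.1 < m) (hmf : m < f.2) :
    ∀ᶠ y in 𝓝[>] (abscissa D m), height D e y ≠ height D f y := by
  have he2 := (mem_edges.1 he).2
  have hf2 := (mem_edges.1 hf).2
  have away : (crossings D e f \ {abscissa D m})ᶜ ∈ 𝓝 (abscissa D m) :=
    ((finite_crossings D he hf hef).subset Set.sdiff_subset).isClosed.compl_mem_nhds (by simp)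
  have right := Ioo_mem_nhdsGT (lt_min (abscissa_lt D hme he2) (abscissa_lt D hmf hf2))
  filter_upwards [mem_nhdsWithin_of_mem_nhds away, right] with y hy hmy heq
  refine hy ⟨(mem_crossings D).2 ⟨(max_lt ?_ ?_).trans hmy.1, hmy.2, heq⟩, hmy.1.ne'⟩
  exacts [abscissa_lt D hem (hme.trans he2), abscissa_lt D hfm (hme.trans he2)]

/-- Abscissas `y m` so close to the right of the vertices `m` that the edges passing above or below
`m` do so at `y m` too, and generic in that these edges have distinct heights at `y m`. -/
structure IsSampling (y : ℕ → ℝ) : Prop where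
  lt : ∀ m < n, abscissa D m < y m
  lt_succ : ∀ m, m + 1 < n → y m < abscissa D (m + 1)
  mul_pos : ∀ e ∈ edges n, ∀ m, e.1 < m → m < e.2 →
    0 < height D e (abscissa D m) * height D e (y m)
  ne : ∀ e ∈ edges n, ∀ f ∈ edges n, e ≠ f → ∀ m, e.1 < m → m < e.2 → f.1 < m → m < f.2 →
    height D e (y m) ≠ height D f (y m)

lemma exists_isSampling : ∃ y, IsSampling D y := by
  have generic (m : ℕ) : ∀ᶠ y in 𝓝[>] (abscissa D m), (m + 1 < n → y < abscissa D (m + 1)) ∧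
      (∀ e ∈ edges n, e.1 < m → m < e.2 → 0 < height D e (abscissa D m) * height D e y) ∧
      (∀ e ∈ edges n, ∀ f ∈ edges n, e ≠ f → e.1 < m → m < e.2 → f.1 < m → m < f.2 →
        height D e y ≠ height D f y) := by
    refine .and ?_ (.and ?_ ?_)
    · refine eventually_imp_distrib_left.2 fun hm => ?_
      filter_upwards [Ioo_mem_nhdsGT (abscissa_lt D m.lt_succ_self hm)] with y hy using hy.2
    · simp only [eventually_all_finset, eventually_imp_distrib_left]
      exact fun e he => eventually_height_mul_pos D he
    · simp only [eventually_all_finset, eventually_imp_distrib_left]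
      exact fun e he f hf => eventually_height_ne D he hf
  choose y hy using fun m => ((generic m).and self_mem_nhdsWithin).exists
  exact ⟨y, fun m _ => (hy m).2, fun m => (hy m).1.1, fun e he m => (hy m).1.2.1 e he,
    fun e he f hf hef m => (hy m).1.2.2 e he f hf hef⟩

open Classical in
/-- The heights of the edges sampled at the abscissas `y`. -/
noncomputable def sampledHeight (y : ℕ → ℝ) (e : ℕ × ℕ) (m : ℕ) : ℝ :=
  if IsEnd e m then 0 else height D e (y m)

open Classical in
/-- An abscissa for the slab boundary at `m` at which `e` and `f` are ordered like their sampled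
heights. -/
noncomputable def samplePoint (y : ℕ → ℝ) (e f : ℕ × ℕ) (m : ℕ) : ℝ :=
  if IsEnd e m ∨ IsEnd f m then abscissa D m else y m

namespace IsSampling

variable {D} {y : ℕ → ℝ}

lemma mul_sampledHeight_pos (hy : IsSampling D y) (he : e ∈ edges n) (hm : Active e m)
    (hend : ¬ IsEnd e m) : 0 < height D e (abscissa D m) * sampledHeight D y e m := by
  rw [sampledHeight, if_neg hend]
  exact hy.mul_pos e he m (by grind [Active, IsEnd]) (by grind [Active, IsEnd])

lemma isHeightSystem (hy : IsSampling D y) : IsHeightSystem n (sampledHeight D y) := by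
  refine ⟨fun e _ m hm => if_pos hm, fun e he f hf hef m hem hfm heq => ?_⟩
  have pos_e := hy.mul_sampledHeight_pos he hem
  have pos_f := hy.mul_sampledHeight_pos hf hfm
  have ne := hy.ne e he f hf hef m
  by_cases hend_e : IsEnd e m <;> by_cases hend_f : IsEnd f m
  all_goals simp only [sampledHeight, hend_e, hend_f, if_true, if_false] at heq pos_e pos_f
  · exact ⟨hend_e, hend_f⟩
  · simp [← heq] at pos_f
  · simp [heq] at pos_e
  · unfold Active at hem hfm
    unfold IsEnd at hend_e hend_f
    exact absurd heq (ne (by omega) (by omega) (by omega) (by omega))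

lemma abscissa_le_samplePoint (hy : IsSampling D y) (hm : m < n) :
    abscissa D m ≤ samplePoint D y e f m := by
  unfold samplePoint
  split_ifs
  exacts [le_rfl, (hy.lt m hm).le]

lemma samplePoint_lt_abscissa (hy : IsSampling D y) (hij : i < j) (hj : j < n) :
    samplePoint D y e f i < abscissa D j := by
  refine lt_of_lt_of_le ?_ (abscissa_le D (Nat.succ_le_of_lt hij) hj)
  unfold samplePoint
  split_ifs
  exacts [abscissa_lt D i.lt_succ_self (by omega), hy.lt_succ i (by omega)]

lemma samplePoint_lt_samplePoint (hy : IsSampling D y) (hij : i < j) (hj : j < n) :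
    samplePoint D y e f i < samplePoint D y e f j :=
  (hy.samplePoint_lt_abscissa hij hj).trans_le (hy.abscissa_le_samplePoint hj)

lemma samplePoint_le_min (hy : IsSampling D y) (he : e ∈ edges n) (hf : f ∈ edges n)
    (hem : Active e m) (hfm : Active f m) :
    samplePoint D y e f m ≤ min (abscissa D e.2) (abscissa D f.2) := by
  have he2 := (mem_edges.1 he).2
  have hf2 := (mem_edges.1 hf).2
  by_cases hend : IsEnd e m ∨ IsEnd f m
  · rw [samplePoint, if_pos hend]
    exact le_min (abscissa_le D hem.2 he2) (abscissa_le D hfm.2 hf2)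
  · unfold Active at hem hfm
    unfold IsEnd at hend
    exact le_min (hy.samplePoint_lt_abscissa (by omega) he2).le
      (hy.samplePoint_lt_abscissa (by omega) hf2).le

lemma height_samplePoint_lt (hy : IsSampling D y) (he : e ∈ edges n) (hf : f ∈ edges n)
    (hem : Active e m) (hfm : Active f m) :
    (sampledHeight D y e m < sampledHeight D y f m →
      height D e (samplePoint D y e f m) < height D f (samplePoint D y e f m)) ∧
    (sampledHeight D y f m < sampledHeight D y e m →
      height D f (samplePoint D y e f m) < height D e (samplePoint D y e f m)) := by
  have pos_e := hy.mul_sampledHeight_pos he hem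
  have pos_f := hy.mul_sampledHeight_pos hf hfm
  have zero_e := height_of_isEnd (m := m) D he
  have zero_f := height_of_isEnd (m := m) D hf
  by_cases hend_e : IsEnd e m <;> by_cases hend_f : IsEnd f m <;>
    simp only [samplePoint, sampledHeight, hend_e, hend_f, if_true, if_false, true_or, or_true,
      or_self, forall_const] at *
  · simp
  · rw [zero_e]
    rw [mul_pos_iff] at pos_f
    grind
  · rw [zero_f]
    rw [mul_pos_iff] at pos_e
    grind
  · simp

lemma exists_mem_crossings (hy : IsSampling D y) (hef : SlabInverted n (sampledHeight D y) m e f) :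
    ∃ t ∈ crossings D e f, samplePoint D y e f m < t ∧ t < samplePoint D y e f (m + 1) := by
  obtain ⟨he, hem, hem'⟩ := mem_slabEdges.1 hef.1
  obtain ⟨hf, hfm, hfm'⟩ := mem_slabEdges.1 hef.2.1
  have hm : m + 1 < n := hem'.2.trans_lt (mem_edges.1 he).2
  have left_le : max (abscissa D e.1) (abscissa D f.1) ≤ samplePoint D y e f m :=
    (max_le (abscissa_le D hem.1 (by omega)) (abscissa_le D hfm.1 (by omega))).trans
      (hy.abscissa_le_samplePoint (by omega))
  have le_right := hy.samplePoint_le_min he hf hem' hfm'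
  have lt := hy.samplePoint_lt_samplePoint (e := e) (f := f) m.lt_succ_self hm
  have cont_e := (continuousOn_height D he).mono (Set.Icc_subset_Icc
    ((le_max_left _ _).trans left_le) (le_right.trans (min_le_left _ _)))
  have cont_f := (continuousOn_height D hf).mono (Set.Icc_subset_Icc
    ((le_max_right _ _).trans left_le) (le_right.trans (min_le_right _ _)))
  have order := hy.height_samplePoint_lt he hf hem hfm
  have order' := hy.height_samplePoint_lt he hf hem' hfm'
  obtain ⟨t, ht, heq⟩ : ∃ t ∈ Set.Icc (samplePoint D y e f m) (samplePoint D y e f (m + 1)),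
      height D e t = height D f t := by
    rcases hef.2.2 with ⟨h, h'⟩ | ⟨h, h'⟩
    · exact isPreconnected_Icc.intermediate_value₂ (Set.left_mem_Icc.2 lt.le)
        (Set.right_mem_Icc.2 lt.le) cont_e cont_f (order.1 h).le (order'.2 h').le
    · exact (isPreconnected_Icc.intermediate_value₂ (Set.left_mem_Icc.2 lt.le)
        (Set.right_mem_Icc.2 lt.le) cont_f cont_e (order.2 h).le (order'.1 h').le).imp
        fun t ht => ⟨ht.1, ht.2.symm⟩
  have gt : samplePoint D y e f m < t := ht.1.lt_of_ne (by grind [SlabInverted, Inverted])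
  have lt : t < samplePoint D y e f (m + 1) := ht.2.lt_of_ne (by grind [SlabInverted, Inverted])
  exact ⟨t, (mem_crossings D).2 ⟨left_le.trans_lt gt, lt.trans_le le_right, heq⟩, gt, lt⟩

lemma edgeInversions_le (hy : IsSampling D y) (he : e ∈ edges n) (hf : f ∈ edges n)
    (hef : e ≠ f) : edgeInversions n (sampledHeight D y) e f ≤ (crossings D e f).ncard := by
  refine card_le_ncard_of_forall_exists_mem_Ioo (τ := samplePoint D y e f)
    (finite_crossings D he hf hef) (fun m _ m' hm' hmm => ?_)
    fun m hm => hy.exists_mem_crossings (mem_filter.1 hm).2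
  rcases (Nat.succ_le_of_lt hmm).eq_or_lt with rfl | hlt
  exacts [le_rfl, (hy.samplePoint_lt_samplePoint hlt (mem_range.1 (mem_filter.1 hm').1)).le]

end IsSampling

theorem Zval_le_cr : Zval n ≤ D.cr := by
  obtain ⟨y, hy⟩ := exists_isSampling D
  have hill := hy.isHeightSystem.two_mul_Zval_le_totalInversions
  rw [cr_eq_sum_crossings, Nat.le_div_iff_mul_le two_pos, mul_comm]
  refine hill.trans ?_
  rw [totalInversions_eq_sum, sum_filter]
  refine sum_le_sum fun p hp => ?_
  split_ifs with hne
  · exact hy.edgeInversions_le (mem_product.1 hp).1 (mem_product.1 hp).2 hne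
  · refine (card_eq_zero.2 (filter_eq_empty_iff.2 fun m _ hm => hm.2.2.ne ?_)).le
    exact not_not.1 hne

end Drawing

section TwoPage

/-- The two pages are the half-planes above (`true`) and below (`false`) the axis. -/
def pageSign (b : Bool) : ℤ := if b then 1 else -1

/-- Exactly one endpoint of each of the two edges lies strictly between those of the other. -/
def Interleaved (e f : ℕ × ℕ) : Prop :=
  (e.1 < f.1 ∧ f.1 < e.2 ∧ e.2 < f.2) ∨ (f.1 < e.1 ∧ e.1 < f.2 ∧ f.2 < e.2)

instance (e f : ℕ × ℕ) : Decidable (Interleaved e f) := by unfold Interleaved; infer_instance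

/-- The edge `e` drawn as a parabola on the page `s (e.1 + e.2)`. -/
def parabola (s : ℕ → Bool) (e : ℕ × ℕ) (t : ℝ) : ℝ :=
  pageSign (s (e.1 + e.2)) * ((t - e.1) * (e.2 - t))

/-- The abscissa at which the parabolas of two edges on the same page meet. -/
noncomputable def meetingPoint (e f : ℕ × ℕ) : ℝ :=
  ((f.1 * f.2 : ℝ) - e.1 * e.2) / ((f.1 + f.2) - (e.1 + e.2))

variable {s : ℕ → Bool} {e f : ℕ × ℕ} {t : ℝ} {n : ℕ}

lemma pageSign_ne_zero (b : Bool) : pageSign b ≠ 0 := by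
  cases b <;> decide

lemma eq_of_pageSign_mul_eq {b b' : Bool} {x y : ℝ} (hx : 0 < x) (hy : 0 < y)
    (h : (pageSign b : ℝ) * x = pageSign b' * y) : b = b' ∧ x = y := by
  cases b <;> cases b' <;> simp [pageSign] at h ⊢ <;> linarith

lemma Interleaved.symm (h : Interleaved e f) : Interleaved f e := Or.symm h

lemma Interleaved.add_ne_add (h : Interleaved e f) : (f.1 + f.2 : ℝ) - (e.1 + e.2) ≠ 0 := by
  rw [sub_ne_zero]
  norm_cast
  unfold Interleaved at h
  omega

lemma meetingPoint_comm (e f : ℕ × ℕ) : meetingPoint e f = meetingPoint f e := by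
  rw [meetingPoint, ← neg_div_neg_eq, neg_sub, neg_sub, meetingPoint]

lemma eq_meetingPoint_iff (h : Interleaved e f) :
    t = meetingPoint e f ↔ (t - e.1) * (e.2 - t) = (t - f.1) * (f.2 - t) := by
  rw [meetingPoint, eq_div_iff h.add_ne_add]
  constructor <;> intro h <;> linarith

lemma interleaved_of_mul_eq (hef : e ≠ f) (left : max (e.1 : ℝ) f.1 < t)
    (right : t < min (e.2 : ℝ) f.2) (h : (t - e.1) * (e.2 - t) = (t - f.1) * (f.2 - t)) :
    Interleaved e f := by
  obtain ⟨he1, hf1⟩ := max_lt_iff.1 left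
  obtain ⟨he2, hf2⟩ := lt_min_iff.1 right
  have hfe : f.1 < e.2 := by exact_mod_cast hf1.trans he2
  have hef' : e.1 < f.2 := by exact_mod_cast he1.trans hf2
  have not_nested {a b c d : ℝ} (hac : a ≤ c) (hdb : d ≤ b) (hc : c < t) (hd : t < d)
      (h : (t - a) * (b - t) = (t - c) * (d - t)) : a = c ∧ b = d := by
    constructor <;> nlinarith
  by_contra hnot
  rcases (show (e.1 ≤ f.1 ∧ f.2 ≤ e.2) ∨ (f.1 ≤ e.1 ∧ e.2 ≤ f.2) by
    unfold Interleaved at hnot; omega) with ⟨h1, h2⟩ | ⟨h1, h2⟩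
  · have := not_nested (Nat.cast_le.2 h1) (Nat.cast_le.2 h2) hf1 hf2 h
    exact hef (Prod.ext (by exact_mod_cast this.1) (by exact_mod_cast this.2))
  · have := not_nested (Nat.cast_le.2 h1) (Nat.cast_le.2 h2) he1 he2 h.symm
    exact hef (Prod.ext (by exact_mod_cast this.1.symm) (by exact_mod_cast this.2.symm))

lemma meetingPoint_mem (h : Interleaved e f) :
    max (e.1 : ℝ) f.1 < meetingPoint e f ∧ meetingPoint e f < min (e.2 : ℝ) f.2 := by
  wlog h' : e.1 < f.1 ∧ f.1 < e.2 ∧ e.2 < f.2 generalizing e f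
  · rw [meetingPoint_comm, max_comm, min_comm]
    exact this h.symm (h.resolve_left h')
  obtain ⟨h1, h2, h3⟩ : (e.1 : ℝ) < f.1 ∧ (f.1 : ℝ) < e.2 ∧ (e.2 : ℝ) < f.2 := by exact_mod_cast h'
  rw [max_eq_right h1.le, min_eq_left h3.le, meetingPoint, lt_div_iff₀ (by linarith),
    div_lt_iff₀ (by linarith)]
  constructor <;> nlinarith

lemma parabola_meet_iff (hef : e ≠ f) :
    (max (e.1 : ℝ) f.1 < t ∧ t < min (e.2 : ℝ) f.2 ∧ parabola s e t = parabola s f t) ↔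
      (s (e.1 + e.2) = s (f.1 + f.2) ∧ Interleaved e f) ∧ t = meetingPoint e f := by
  constructor
  · rintro ⟨left, right, meet⟩
    obtain ⟨he1, hf1⟩ := max_lt_iff.1 left
    obtain ⟨he2, hf2⟩ := lt_min_iff.1 right
    obtain ⟨page, h⟩ := eq_of_pageSign_mul_eq (mul_pos (sub_pos.2 he1) (sub_pos.2 he2))
      (mul_pos (sub_pos.2 hf1) (sub_pos.2 hf2)) meet
    have inter := interleaved_of_mul_eq hef left right h
    exact ⟨⟨page, inter⟩, (eq_meetingPoint_iff inter).2 h⟩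
  · rintro ⟨⟨page, inter⟩, ht⟩
    obtain ⟨left, right⟩ := meetingPoint_mem inter
    refine ⟨ht ▸ left, ht ▸ right, ?_⟩
    rw [parabola, parabola, page, (eq_meetingPoint_iff inter).1 ht]

lemma finite_parabola_meet (hef : e ≠ f) :
    {t : ℝ | max (e.1 : ℝ) f.1 < t ∧ t < min (e.2 : ℝ) f.2 ∧
      parabola s e t = parabola s f t}.Finite :=
  (Set.finite_singleton (meetingPoint e f)).subset fun _ ht => ((parabola_meet_iff hef).1 ht).2

lemma parabola_sub_mul_parabola_sub_neg (page : s (e.1 + e.2) = s (f.1 + f.2))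
    (inter : Interleaved e f) (ht : t = meetingPoint e f) {p u : ℝ} (hp : p < t) (hu : t < u) :
    (parabola s e p - parabola s f p) * (parabola s e u - parabola s f u) < 0 := by
  have meet := (eq_meetingPoint_iff inter).1 ht
  set c : ℝ := pageSign (s (f.1 + f.2)) * ((f.1 + f.2) - (e.1 + e.2)) with hc
  have hc0 : c ≠ 0 := mul_ne_zero (Int.cast_ne_zero.2 (pageSign_ne_zero _)) inter.add_ne_add
  have linear (r : ℝ) : parabola s e r - parabola s f r = c * (t - r) := by
    rw [parabola, parabola, page, hc]
    linear_combination (pageSign (s (f.1 + f.2)) : ℝ) * meet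
  calc (parabola s e p - parabola s f p) * (parabola s e u - parabola s f u)
      = c ^ 2 * ((t - p) * (t - u)) := by rw [linear, linear]; ring
    _ < 0 := mul_neg_of_pos_of_neg (by positivity)
      (mul_neg_of_pos_of_neg (sub_pos.2 hp) (sub_neg.2 hu))

lemma val_pair_ne {i j k l : Fin n} (h : (i, j) ≠ (k, l)) : (i.1, j.1) ≠ (k.1, l.1) := by
  simpa [Prod.ext_iff, Fin.ext_iff] using h

/-- The two-page drawing of `K n` with `x i = i` in which the page of `{i, j}` depends only on
`i + j`. -/
noncomputable def twoPage (s : ℕ → Bool) (n : ℕ) : XMonotoneDrawing n where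
  x i := (i : ℕ)
  x_strictMono i j h := by simpa using h
  e i j := parabola s (i, j)
  cont i j _ := by unfold parabola; fun_prop
  end_left i j _ := by simp [parabola]
  end_right i j _ := by simp [parabola]
  avoid_vertex i m j him hmj := by
    have him : ((m : ℕ) : ℝ) - (i : ℕ) ≠ 0 := sub_ne_zero.2 (Nat.cast_lt.2 him).ne'
    have hmj : ((j : ℕ) : ℝ) - (m : ℕ) ≠ 0 := sub_ne_zero.2 (Nat.cast_lt.2 hmj).ne'
    exact mul_ne_zero (Int.cast_ne_zero.2 (pageSign_ne_zero _)) (mul_ne_zero him hmj)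
  cross_finite i j k l _ _ hne := finite_parabola_meet (val_pair_ne hne)
  sign_change i j k l _ _ hne t left right meet := by
    obtain ⟨⟨page, inter⟩, ht⟩ := (parabola_meet_iff (val_pair_ne hne)).1 ⟨left, right, meet⟩
    exact ⟨1, one_pos, fun p _ _ hp u _ hu _ =>
      parabola_sub_mul_parabola_sub_neg page inter ht hp hu⟩

lemma ncard_crossings_twoPage [NeZero n] (he : e ∈ edges n) (hf : f ∈ edges n) (hef : e ≠ f) :
    (crossings (twoPage s n) e f).ncard =
      if s (e.1 + e.2) = s (f.1 + f.2) ∧ Interleaved e f then 1 else 0 := by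
  have heq : crossings (twoPage s n) e f = {t | (s (e.1 + e.2) = s (f.1 + f.2) ∧
      Interleaved e f) ∧ t = meetingPoint e f} := by
    rw [mem_edges] at he hf
    ext t
    rw [Set.mem_ofPred_eq, ← parabola_meet_iff hef]
    simp [crossings, XMonotoneDrawing.crossSet, twoPage, Nat.mod_eq_of_lt he.2,
      Nat.mod_eq_of_lt hf.2, Nat.mod_eq_of_lt (he.1.trans he.2),
      Nat.mod_eq_of_lt (hf.1.trans hf.2)]
  split_ifs with h <;> simp [heq, h]

/-- The signature of the two-page drawing with pages `s`. -/
def sumSignature (s : ℕ → Bool) : Signature := fun i _ k => s (i + k)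

lemma admissible_sumSignature (s : ℕ → Bool) (n : ℕ) : (sumSignature s).Admissible n :=
  fun _ _ _ _ _ _ _ _ => ⟨fun h => h.symm, fun _ => rfl⟩

theorem cr_twoPage [NeZero n] (s : ℕ → Bool) :
    (twoPage s n).cr = (sumSignature s).oddCrossings n := by
  set G : ℕ × ℕ → ℕ × ℕ → ℕ := fun e f =>
    if s (e.1 + e.2) = s (f.1 + f.2) ∧ Interleaved e f then 1 else 0
  have hsum : ∑ p ∈ edges n ×ˢ edges n with p.1 ≠ p.2, (crossings (twoPage s n) p.1 p.2).ncard =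
      ∑ p ∈ disjointPairs n, G p.1 p.2 := by
    have ncard (p) (hp : p ∈ (edges n ×ˢ edges n).filter fun p => p.1 ≠ p.2) :
        (crossings (twoPage s n) p.1 p.2).ncard = G p.1 p.2 := by
      simp only [mem_filter, mem_product] at hp
      exact ncard_crossings_twoPage hp.1.1 hp.1.2 hp.2
    rw [sum_congr rfl ncard]
    symm
    refine sum_subset ?_ ?_ <;> grind [mem_disjointPairs, Interleaved]
  have hodd : ∑ p ∈ disjointPairs n, G p.1 p.2 = 2 * (sumSignature s).oddCrossings n := by
    rw [sum_disjointPairs, Signature.oddCrossings, mul_sum]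
    refine sum_congr rfl fun q hq => ?_
    rw [mem_quads] at hq
    grind [Signature.oddPairs, sumSignature, Interleaved]
  rw [cr_eq_sum_crossings, hsum, hodd, Nat.mul_div_cancel_left _ two_pos]

end TwoPage

section BlockPages

open Signature

/-- Partial sums of the signs of the pages. -/
def prefixSum (s : ℕ → Bool) (t : ℕ) : ℤ := ∑ c ∈ range t, pageSign (s c)

lemma sum_range_pageSign_add (s : ℕ → Bool) (p t : ℕ) :
    ∑ c ∈ range t, pageSign (s (p + c)) = prefixSum s (p + t) - prefixSum s p := by
  rw [prefixSum, sum_range_add, prefixSum, add_sub_cancel_left]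

lemma imbalance_sumSignature (s : ℕ → Bool) {n i j : ℕ} (hij : i < j) (hj : j < n) :
    (sumSignature s).imbalance n i j =
      prefixSum s (i + n) - prefixSum s j - pageSign (s (i + j)) * (j - i) := by
  obtain ⟨p, rfl⟩ := Nat.exists_eq_add_of_lt hij
  obtain ⟨q, rfl⟩ := Nat.exists_eq_add_of_lt hj
  set j := i + p + 1 with hjdef
  have low : ∑ m ∈ range i, (sumSignature s).side i j m =
      prefixSum s (j + i) - prefixSum s j := by
    rw [← sum_range_pageSign_add]
    refine sum_congr rfl fun m hm => ?_
    rw [side_of_lt (mem_range.1 hm) hij, sumSignature, pageSign, add_comm m j]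
  have mid : ∑ m ∈ range p, (sumSignature s).side i j (i + 1 + m) =
      -(pageSign (s (i + j)) * p) := by
    have side (m) (hm : m ∈ range p) :
        (sumSignature s).side i j (i + 1 + m) = -pageSign (s (i + j)) := by
      have hm := mem_range.1 hm
      rw [side_of_mid (by omega) (by omega), sumSignature, pageSign]
      split_ifs <;> rfl
    rw [sum_congr rfl side, sum_const, card_range, nsmul_eq_mul]
    ring
  have high : ∑ m ∈ range q, (sumSignature s).side i j (j + 1 + m) =
      prefixSum s (i + (j + q + 1)) - prefixSum s (i + j + 1) := by
    rw [show i + (j + q + 1) = i + j + 1 + q by ring, ← sum_range_pageSign_add]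
    refine sum_congr rfl fun m _ => ?_
    rw [side_of_gt (by omega) hij, sumSignature, pageSign]
    congr 3
    omega
  have last : prefixSum s (i + j + 1) = prefixSum s (j + i) + pageSign (s (i + j)) := by
    rw [prefixSum, sum_range_succ, prefixSum, add_comm j i]
  rw [imbalance, show j + q + 1 = i + 1 + p + 1 + q by omega, sum_range_add, sum_range_succ,
    sum_range_add, sum_range_succ, show i + 1 + p = j by omega, low, mid,
    side_self_left hij, side_self_right hij, high, last]
  rw [show i + (j + q + 1) = i + (j + 1 + q) by ring, hjdef]
  push_cast
  ring

/-- Alternating blocks of sums of lengths `h, q, h, q`, the first one on the upper page. For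
`n = h + q` vertices the page is determined by `i + j` modulo `n`. -/
def blockPages (h q c : ℕ) : Bool := decide (c < h ∨ h + q ≤ c ∧ c < h + q + h)

variable {h q i j a b : ℕ}

lemma pageSign_blockPages (h q c : ℕ) :
    pageSign (blockPages h q c) = if c < h ∨ h + q ≤ c ∧ c < h + q + h then 1 else -1 := by
  simp [pageSign, blockPages]

lemma prefixSum_blockPages {c : ℕ} (hc : c ≤ 2 * (h + q)) :
    prefixSum (blockPages h q) c =
      if c ≤ h then (c : ℤ) else if c ≤ h + q then 2 * h - c
      else if c ≤ h + q + h then (c : ℤ) - 2 * q else 4 * h - c := by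
  induction c with
  | zero => simp [prefixSum]
  | succ c ih =>
    rw [prefixSum, sum_range_succ, ← prefixSum, ih (by omega), pageSign_blockPages]
    split_ifs <;> omega

lemma imbalance_blockPages_low (hij : i < j) (hj : j < h) (hh : h ≤ q + 2) :
    (sumSignature (blockPages h q)).imbalance (h + q) i j =
      if i + j < h then (h - q : ℤ) - 2 * (j - i) else h - q := by
  rw [imbalance_sumSignature _ hij (by omega), prefixSum_blockPages (by omega),
    prefixSum_blockPages (by omega), pageSign_blockPages]
  split_ifs <;> omega

lemma imbalance_blockPages_high (hab : a < b) (hb : b < q) (hh : q ≤ h) :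
    (sumSignature (blockPages h q)).imbalance (h + q) (h + a) (h + b) =
      if a + b < q then (h - q : ℤ) else 2 * (b - a) + (h - q) := by
  rw [imbalance_sumSignature _ (by omega) (by omega), prefixSum_blockPages (by omega),
    prefixSum_blockPages (by omega), pageSign_blockPages]
  split_ifs <;> omega

lemma imbalance_blockPages_mixed (hi : i < h) (hb : b < q) :
    (sumSignature (blockPages h q)).imbalance (h + q) i (h + b) =
      if i + b < q then 2 * (b : ℤ) + (h - q) else (h - q : ℤ) - 2 * (h - i) := by
  rw [imbalance_sumSignature _ (by omega) (by omega), prefixSum_blockPages (by omega),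
    prefixSum_blockPages (by omega), pageSign_blockPages]
  split_ifs <;> omega

end BlockPages

section BlockSums

lemma six_mul_sum_range_affine_sq (m : ℕ) (r t : ℤ) :
    6 * ∑ b ∈ range m, (r * b + t) ^ 2 =
      r ^ 2 * (m * (m - 1) * (2 * m - 1)) + 6 * r * t * (m * (m - 1)) + 6 * t ^ 2 * m := by
  induction m with
  | zero => simp
  | succ m ih => rw [sum_range_succ, mul_add, ih]; push_cast; ring

lemma six_mul_sum_edges_sq (q : ℕ) (ε : ℤ) :
    6 * ∑ e ∈ edges q, (2 * ((e.2 : ℤ) - e.1) + ε) ^ 2 =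
      q * (q - 1) * (2 * q * (q + 1) + 4 * ε * (q + 1) + 3 * ε ^ 2) := by
  induction q with
  | zero => simp [edges]
  | succ q ih =>
    have last : ∑ i ∈ range q, (2 * ((q : ℤ) - i) + ε) ^ 2 =
        ∑ i ∈ range q, (-2 * i + (2 * q + ε)) ^ 2 := sum_congr rfl fun i _ => by ring
    rw [sum_edges_succ, mul_add, ih, last, six_mul_sum_range_affine_sq]
    push_cast
    ring

lemma six_mul_sum_staircase_sq (q ε : ℕ) :
    6 * ∑ k ∈ range (q + ε), ∑ b ∈ range q,
        (if b + ε ≤ k then 2 * (b : ℤ) + ε else ε - 2 * (k + 1)) ^ 2 =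
      2 * q * (q + ε) * (2 * q * (q + ε) + ε ^ 2 - 2) := by
  induction q with
  | zero => simp
  | succ q ih =>
    have row : ∑ b ∈ range (q + 1),
        (if b + ε ≤ q + ε then 2 * (b : ℤ) + ε else ε - 2 * ((q + ε : ℕ) + 1)) ^ 2 =
        ∑ b ∈ range (q + 1), (2 * (b : ℤ) + ε) ^ 2 :=
      sum_congr rfl fun b hb => by rw [if_pos (by have := mem_range.1 hb; omega)]
    have column : ∑ k ∈ range (q + ε),
        (if q + ε ≤ k then 2 * (q : ℤ) + ε else ε - 2 * (k + 1)) ^ 2 =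
        ∑ k ∈ range (q + ε), (-2 * (k : ℤ) + (ε - 2)) ^ 2 :=
      sum_congr rfl fun k hk => by rw [if_neg (mem_range.1 hk).not_ge]; ring
    have hrow := six_mul_sum_range_affine_sq (q + 1) 2 ε
    have hcolumn := six_mul_sum_range_affine_sq (q + ε) (-2) (ε - 2)
    rw [add_right_comm, sum_range_succ, row]
    simp only [sum_range_succ _ q, sum_add_distrib, column] at hrow ⊢
    push_cast at hrow hcolumn ⊢
    linear_combination ih + hrow + hcolumn

end BlockSums

section Optimal

variable {q ε : ℕ}

lemma sum_edges_low (hε : ε ≤ 1) :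
    ∑ e ∈ edges (q + ε),
        (if e.1 + e.2 < q + ε then (ε : ℤ) - 2 * ((e.2 : ℤ) - e.1) else ε) ^ 2 =
      ∑ e ∈ edges q,
        (if e.1 + e.2 < q then 2 * ((e.2 : ℤ) - e.1) + ε else ε) ^ 2 + ε * q := by
  obtain rfl | rfl : ε = 0 ∨ ε = 1 := by omega
  · simp only [Nat.cast_zero, add_zero, zero_mul]
    refine sum_congr rfl fun e _ => ?_
    split_ifs <;> ring
  · rw [sum_edges_succ_shift]
    congr 1
    · refine sum_congr rfl fun e _ => ?_
      push_cast
      split_ifs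
      all_goals first | omega | ring
    · trans ∑ _a ∈ range q, (1 : ℤ)
      · refine sum_congr rfl fun a _ => ?_
        push_cast
        split_ifs <;> ring
      · simp

lemma sum_imbalance_sq_blockPages_mixed :
    ∑ i ∈ range (q + ε), ∑ b ∈ range q,
        (sumSignature (blockPages (q + ε) q)).imbalance (q + ε + q) i (q + ε + b) ^ 2 =
      ∑ k ∈ range (q + ε), ∑ b ∈ range q,
        (if b + ε ≤ k then 2 * (b : ℤ) + ε else ε - 2 * (k + 1)) ^ 2 := by
  rw [← sum_range_reflect]
  refine sum_congr rfl fun k hk => sum_congr rfl fun b hb => ?_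
  rw [mem_range] at hk hb
  rw [imbalance_blockPages_mixed (by omega) hb]
  congr 1
  split_ifs <;> omega

lemma sum_imbalance_sq_blockPages (hε : ε ≤ 1) :
    ∑ e ∈ edges (q + ε + q),
        (sumSignature (blockPages (q + ε) q)).imbalance (q + ε + q) e.1 e.2 ^ 2 =
      ∑ e ∈ edges q, ((2 * ((e.2 : ℤ) - e.1) + ε) ^ 2 + ε ^ 2) + ε * q +
        ∑ k ∈ range (q + ε), ∑ b ∈ range q,
          (if b + ε ≤ k then 2 * (b : ℤ) + ε else ε - 2 * (k + 1)) ^ 2 := by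
  have low : ∑ e ∈ edges (q + ε),
        (sumSignature (blockPages (q + ε) q)).imbalance (q + ε + q) e.1 e.2 ^ 2 =
      ∑ e ∈ edges q, (if e.1 + e.2 < q then 2 * ((e.2 : ℤ) - e.1) + ε else ε) ^ 2 + ε * q := by
    rw [← sum_edges_low hε]
    refine sum_congr rfl fun e he => ?_
    rw [mem_edges] at he
    rw [imbalance_blockPages_low he.1 he.2 (by omega)]
    push_cast
    simp only [add_sub_cancel_left]
  have high : ∑ e ∈ edges q, (sumSignature (blockPages (q + ε) q)).imbalance (q + ε + q)
        (q + ε + e.1) (q + ε + e.2) ^ 2 =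
      ∑ e ∈ edges q, (if e.1 + e.2 < q then (ε : ℤ) else 2 * ((e.2 : ℤ) - e.1) + ε) ^ 2 := by
    refine sum_congr rfl fun e he => ?_
    rw [mem_edges] at he
    rw [imbalance_blockPages_high he.1 he.2 (by omega)]
    push_cast
    simp only [add_sub_cancel_left]
  have merge : ∑ e ∈ edges q, (if e.1 + e.2 < q then 2 * ((e.2 : ℤ) - e.1) + ε else ε) ^ 2 +
      ∑ e ∈ edges q, (if e.1 + e.2 < q then (ε : ℤ) else 2 * ((e.2 : ℤ) - e.1) + ε) ^ 2 =
      ∑ e ∈ edges q, ((2 * ((e.2 : ℤ) - e.1) + ε) ^ 2 + ε ^ 2) := by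
    rw [← sum_add_distrib]
    refine sum_congr rfl fun e _ => ?_
    split_ifs <;> ring
  rw [sum_edges_add, low, high, sum_imbalance_sq_blockPages_mixed, ← merge]
  ring

theorem oddCrossings_blockPages (hε : ε ≤ 1) :
    (sumSignature (blockPages (q + ε) q)).oddCrossings (q + ε + q) = Zval (q + ε + q) := by
  have four_mul := Signature.four_mul_oddCrossings
    (admissible_sumSignature (blockPages (q + ε) q) (q + ε + q))
  rw [sum_sub_distrib, sum_imbalance_sq_blockPages hε, sum_add_distrib, sum_const, sum_const,
    nsmul_eq_mul, nsmul_eq_mul] at four_mul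
  have card_q := two_mul_card_edges q
  have card_n := two_mul_card_edges (q + ε + q)
  have edges_sq := six_mul_sum_edges_sq q ε
  have staircase_sq := six_mul_sum_staircase_sq q ε
  suffices 24 * ((sumSignature (blockPages (q + ε) q)).oddCrossings (q + ε + q) : ℤ) =
      24 * (Zval (q + ε + q) : ℤ) by omega
  obtain rfl | rfl : ε = 0 ∨ ε = 1 := by omega
  · have hill := four_mul_Zval_two_mul q
    rw [show 2 * q = q + 0 + q by ring] at hill
    push_cast at *
    linear_combination 6 * four_mul + edges_sq + staircase_sq - 6 * hill -
      3 * (2 * (q : ℤ) - 2) * card_n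
  · have hill := four_mul_Zval_two_mul_add_one q
    rw [show 2 * q + 1 = q + 1 + q by ring] at hill
    push_cast at *
    linear_combination 6 * four_mul + edges_sq + staircase_sq - 6 * hill + 3 * card_q -
      3 * (2 * (q : ℤ) - 1) * card_n

theorem exists_cr_eq_Zval {n : ℕ} (hn : 1 ≤ n) : ∃ D : XMonotoneDrawing n, D.cr = Zval n := by
  have : NeZero n := ⟨by omega⟩
  obtain ⟨q, ε, hε, hq⟩ : ∃ q ε, ε ≤ 1 ∧ n = q + ε + q := ⟨n / 2, n % 2, by omega, by omega⟩
  refine ⟨twoPage (blockPages (q + ε) q) n, ?_⟩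
  rw [cr_twoPage, hq, oddCrossings_blockPages hε]

end Optimal

end MonotoneKn

/-- Every simple x-monotone drawing of `K n` has at least `Z(n)`
crossings; hence (together with the matching upper bound) the monotone crossing number
of `K n` — the least number of crossings over all x-monotone drawings — equals `Z(n)`. -/
theorem simple_monotone_cr_ge_Z_and_monotone_crossing_number (n : ℕ) (hn : 1 ≤ n) :
    (∀ D : XMonotoneDrawing n, D.Simple → Zval n ≤ D.cr) ∧
      IsLeast {m : ℕ | ∃ D : XMonotoneDrawing n, D.cr = m} (Zval n) := by
  have : NeZero n := ⟨by omega⟩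
  exact ⟨fun D _ => MonotoneKn.Zval_le_cr D, MonotoneKn.exists_cr_eq_Zval hn,
    fun _ ⟨D, hD⟩ => hD ▸ MonotoneKn.Zval_le_cr D⟩
end

section
/- For every semisimple x-monotone drawing D of K_n, the number ocr(D) of pairs of edges crossing an odd number of times satisfies ocr(D) = 2·Σ_{k=0}^{⌊n/2⌋−2} E_{≤≤k}(D) − (1/2)·C(n,2)·⌊(n−2)/2⌋ − (1/2)(1+(−1)^n)·E_{≤≤⌊n/2⌋−2}(D). -/
/-!
The parity of the number of crossings of two disjoint edges is read off the signature: by the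
intermediate value theorem it records whether the vertical order of the two arcs is the same at
both ends of their common domain. If adjacent edges cross evenly, each admissible 4-tuple therefore
contains one odd pair if it is convex and none otherwise, so `ocr` counts convex 4-tuples.

Convex 4-tuples are counted by a second moment. Each edge gives the other `n - 2` vertices a side
`±1`. Among the six ways to split a 4-tuple into an edge and a pair of other vertices, the edge has
the pair on one side in four cases and separates it in two if the 4-tuple is convex, and in three
cases each otherwise; so the products of sides add up to `2` or `0`. For a fixed edge with `ℓ`
vertices on its left, the same products add up to `((2ℓ - (n - 2))² - (n - 2)) / 2`. Finally
`|2ℓ - (n - 2)| = n - 2 - 2k` for a `k`-edge, and the resulting polynomial in `⌊n/2⌋ - 1 - k` is a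
combination of the edge's contributions to the sums `E_{≤≤k}`.
-/

section SignChange

open Set Filter Topology

theorem mul_pos_of_isPreconnected {X : Type*} [TopologicalSpace X] {s : Set X} {f : X → ℝ}
    (hs : IsPreconnected s) (hf : ContinuousOn f s) (h0 : ∀ x ∈ s, f x ≠ 0) {x y : X}
    (hx : x ∈ s) (hy : y ∈ s) : 0 < f x * f y := by
  by_contra! h
  have hzero : (0 : ℝ) ∈ f '' s := by
    rcases mul_nonpos_iff.1 h with ⟨h₁, h₂⟩ | ⟨h₁, h₂⟩
    · exact hs.intermediate_value hy hx hf ⟨h₂, h₁⟩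
    · exact hs.intermediate_value hx hy hf ⟨h₁, h₂⟩
  obtain ⟨z, hz, hz0⟩ := hzero
  exact h0 z hz hz0

/-- The function `f` has opposite signs just before and just after `t`. -/
def ChangesSignAt (f : ℝ → ℝ) (t : ℝ) : Prop :=
  ∀ᶠ s in 𝓝[<] t, ∀ᶠ u in 𝓝[>] t, f s * f u < 0

theorem mul_neg_iff_not_mul_neg {x y z : ℝ} (hxy : x * y < 0) (hz : z ≠ 0) :
    x * z < 0 ↔ ¬ y * z < 0 := by
  grind [mul_neg_iff]

theorem ChangesSignAt.exists_mul_neg_of_isLeast {f : ℝ → ℝ} {a b t : ℝ} (h : ChangesSignAt f t)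
    (hf : ContinuousOn f (Icc a b)) (ha : f a ≠ 0) (hfin : (Ioo a b ∩ f ⁻¹' {0}).Finite)
    (ht : IsLeast (Ioo a b ∩ f ⁻¹' {0}) t) :
    ∃ u ∈ Ioo t b, f a * f u < 0 ∧
      Ioo u b ∩ f ⁻¹' {0} = (Ioo a b ∩ f ⁻¹' {0}) \ {t} := by
  obtain ⟨⟨⟨hat, htb⟩, -⟩, hmin⟩ := ht
  obtain ⟨v, htv, hv⟩ : ∃ v > t, Ioc t v ⊆ ((Ioo a b ∩ f ⁻¹' {0}) \ {t})ᶜ :=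
    mem_nhdsGT_iff_exists_Ioc_subset.1 <| mem_nhdsWithin_of_mem_nhds <|
      hfin.sdiff.isClosed.isOpen_compl.mem_nhds (by simp)
  obtain ⟨s, hs, has, hst⟩ := (h.and (Ioo_mem_nhdsLT hat)).exists
  obtain ⟨u, hsu, htu, huvb⟩ := (hs.and (Ioo_mem_nhdsGT (lt_min htv htb))).exists
  have hpos : 0 < f a * f s := by
    refine mul_pos_of_isPreconnected (isPreconnected_Ico (a := a) (b := t))
      (hf.mono (Ico_subset_Icc_self.trans (Icc_subset_Icc_right htb.le)))
      (fun x hx h0 ↦ ?_) (left_mem_Ico.2 hat) ⟨has.le, hst⟩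
    rcases hx.1.eq_or_lt with rfl | hax
    · exact ha h0
    · exact (hmin ⟨⟨hax, hx.2.trans htb⟩, h0⟩).not_gt hx.2
  refine ⟨u, ⟨htu, huvb.trans_le (min_le_right _ _)⟩, by grind [mul_neg_iff, mul_pos_iff], ?_⟩
  ext x
  have hle : x ∈ Ioo a b ∩ f ⁻¹' {0} → t ≤ x := fun hx ↦ hmin hx
  have hnot : x ∈ Ioc t v → x ∉ (Ioo a b ∩ f ⁻¹' {0}) \ {t} := fun hx ↦ hv hx
  grind

theorem odd_ncard_zeros_iff {f : ℝ → ℝ} {a b : ℝ} (hab : a < b) (hf : ContinuousOn f (Icc a b))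
    (ha : f a ≠ 0) (hb : f b ≠ 0) (hfin : (Ioo a b ∩ f ⁻¹' {0}).Finite)
    (hch : ∀ t ∈ Ioo a b, f t = 0 → ChangesSignAt f t) :
    Odd (Ioo a b ∩ f ⁻¹' {0}).ncard ↔ f a * f b < 0 := by
  induction hm : (Ioo a b ∩ f ⁻¹' {0}).ncard generalizing a with
  | zero =>
    have hempty : Ioo a b ∩ f ⁻¹' {0} = ∅ := (ncard_eq_zero hfin).1 hm
    have h0 : ∀ x ∈ Icc a b, f x ≠ 0 := by
      have h1 : ∀ x ∈ Ioo a b, f x ≠ 0 := fun x hx h ↦ hempty.subset ⟨hx, h⟩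
      grind
    simpa using (mul_pos_of_isPreconnected isPreconnected_Icc hf h0 (left_mem_Icc.2 hab.le)
      (right_mem_Icc.2 hab.le)).le
  | succ m ih =>
    obtain ⟨t, ht, hmin⟩ := exists_min_image _ id hfin (nonempty_of_ncard_ne_zero (by omega))
    obtain ⟨u, ⟨htu, hub⟩, hau, hzeros⟩ :=
      (hch t ht.1 ht.2).exists_mul_neg_of_isLeast hf ha hfin ⟨ht, hmin⟩
    have hau' : a < u := ht.1.1.trans htu
    rw [Nat.odd_add_one, mul_neg_iff_not_mul_neg hau hb,
      ih hub (hf.mono (Icc_subset_Icc_left hau'.le)) (right_ne_zero_of_mul hau.ne)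
        (hzeros ▸ hfin.sdiff) (fun x hx ↦ hch x ⟨hau'.trans hx.1, hx.2⟩)]
    rw [hzeros, ncard_sdiff_singleton_of_mem ht, hm, Nat.add_sub_cancel]

end SignChange

section IncreasingTuples

open scoped Finset

variable {V M R : Type*} [Fintype V] [LinearOrder V] [AddCommMonoid M] [CommSemiring R]

/-- The unordered pairs of distinct elements of `V`, listed as increasing pairs; for `V = Fin n`
these are the edges of the complete graph. -/
def increasingPairs (V : Type*) [Fintype V] [LinearOrder V] : Finset (V × V) :=
  {e | e.1 < e.2}

/-- The four-element subsets of `V`, listed as increasing 4-tuples. -/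
def increasingQuadruples (V : Type*) [Fintype V] [LinearOrder V] : Finset (V × V × V × V) :=
  {q | q.1 < q.2.1 ∧ q.2.1 < q.2.2.1 ∧ q.2.2.1 < q.2.2.2}

@[simp]
theorem mem_increasingPairs {e : V × V} : e ∈ increasingPairs V ↔ e.1 < e.2 := by
  simp [increasingPairs]

@[simp]
theorem mem_increasingQuadruples {a b c d : V} :
    (a, b, c, d) ∈ increasingQuadruples V ↔ a < b ∧ b < c ∧ c < d := by
  simp [increasingQuadruples]

theorem sq_sum_eq_sum_sq_add (g : V → R) :
    (∑ v, g v) ^ 2 = ∑ v, g v ^ 2 + 2 * ∑ e ∈ increasingPairs V, g e.1 * g e.2 := by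
  have hswap : ∑ e ∈ increasingPairs V, g e.1 * g e.2 = ∑ e : V × V with e.2 < e.1, g e.1 * g e.2 :=
    Finset.sum_nbij' Prod.swap Prod.swap (by simp) (by simp) (by simp) (by simp)
      (fun _ _ ↦ mul_comm _ _)
  have hdiag : ∑ v, g v ^ 2 = ∑ e : V × V with e.1 = e.2, g e.1 * g e.2 := by
    simp [Finset.sum_filter, Fintype.sum_prod_type, sq]
  rw [two_mul]
  nth_rw 2 [hswap]
  rw [hdiag, increasingPairs]
  simp only [Finset.sum_filter, ← Finset.sum_add_distrib, sq, Finset.sum_mul_sum,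
    ← Fintype.sum_prod_type']
  refine Finset.sum_congr rfl fun e _ ↦ ?_
  rcases lt_trichotomy e.1 e.2 with h | h | h <;> simp [h, ne_of_lt, ne_of_gt, not_lt_of_gt]

theorem card_increasingPairs (V : Type*) [Fintype V] [LinearOrder V] :
    #(increasingPairs V) = (Fintype.card V).choose 2 := by
  have h := sq_sum_eq_sum_sq_add fun _ : V ↦ (1 : ℕ)
  simp only [Finset.sum_const, Finset.card_univ, one_pow, mul_one, smul_eq_mul] at h
  rw [Nat.choose_two_right, Nat.mul_sub_one, ← sq]
  omega

theorem ite_lt_and_lt_eq_sum {α : Type*} [LinearOrder α] {i j k l : α} {x : M}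
    (hx : i < j → k < l → i = k ∨ i = l ∨ j = k ∨ j = l → x = 0) :
    (if i < j ∧ k < l then x else 0) =
      (if i < j ∧ j < k ∧ k < l then x else 0) + (if i < k ∧ k < j ∧ j < l then x else 0) +
      (if i < k ∧ k < l ∧ l < j then x else 0) + (if k < i ∧ i < j ∧ j < l then x else 0) +
      (if k < i ∧ i < l ∧ l < j then x else 0) + (if k < l ∧ l < i ∧ i < j then x else 0) := by
  grind (splits := 20)

theorem sum_product_increasingPairs (F : (V × V) × V × V → M)
    (hF : ∀ i j k l, i < j → k < l → i = k ∨ i = l ∨ j = k ∨ j = l → F ((i, j), (k, l)) = 0) :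
    ∑ p ∈ increasingPairs V ×ˢ increasingPairs V, F p = ∑ ⟨a, b, c, d⟩ ∈ increasingQuadruples V,
      (F ((a, b), (c, d)) + F ((a, c), (b, d)) + F ((a, d), (b, c)) +
        F ((b, c), (a, d)) + F ((b, d), (a, c)) + F ((c, d), (a, b))) := by
  have reindex (φ : V × V × V × V → (V × V) × V × V) (ψ : (V × V) × V × V → V × V × V × V)
      (hψφ : ∀ q, ψ (φ q) = q) (hφψ : ∀ p, φ (ψ p) = p) :
      ∑ q ∈ increasingQuadruples V, F (φ q) =
        ∑ p, if ψ p ∈ increasingQuadruples V then F p else 0 := by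
    rw [← Finset.sum_filter]
    exact Finset.sum_nbij' φ ψ (by simp [hψφ]) (by simp) (by simp [hψφ]) (by simp [hφψ])
      (by simp)
  simp only [Finset.sum_add_distrib]
  rw [reindex (fun (a, b, c, d) ↦ ((a, b), (c, d))) (fun ((i, j), (k, l)) ↦ (i, j, k, l))
      (fun _ ↦ rfl) (fun _ ↦ rfl),
    reindex (fun (a, b, c, d) ↦ ((a, c), (b, d))) (fun ((i, j), (k, l)) ↦ (i, k, j, l))
      (fun _ ↦ rfl) (fun _ ↦ rfl),
    reindex (fun (a, b, c, d) ↦ ((a, d), (b, c))) (fun ((i, j), (k, l)) ↦ (i, k, l, j))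
      (fun _ ↦ rfl) (fun _ ↦ rfl),
    reindex (fun (a, b, c, d) ↦ ((b, c), (a, d))) (fun ((i, j), (k, l)) ↦ (k, i, j, l))
      (fun _ ↦ rfl) (fun _ ↦ rfl),
    reindex (fun (a, b, c, d) ↦ ((b, d), (a, c))) (fun ((i, j), (k, l)) ↦ (k, i, l, j))
      (fun _ ↦ rfl) (fun _ ↦ rfl),
    reindex (fun (a, b, c, d) ↦ ((c, d), (a, b))) (fun ((i, j), (k, l)) ↦ (k, l, i, j))
      (fun _ ↦ rfl) (fun _ ↦ rfl)]
  rw [← Finset.univ_inter (increasingPairs V ×ˢ increasingPairs V), ← Finset.sum_ite_mem]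
  simp only [← Finset.sum_add_distrib]
  refine Finset.sum_congr rfl fun ⟨⟨i, j⟩, k, l⟩ _ ↦ ?_
  simp only [Finset.mem_product, mem_increasingPairs, mem_increasingQuadruples]
  exact ite_lt_and_lt_eq_sum (hF i j k l)

end IncreasingTuples

namespace Sig

open scoped Finset

variable {n : ℕ} {σ : Fin n → Fin n → Fin n → Bool}

instance (p q r s : Bool) : Decidable (AllowedForm p q r s) :=
  inferInstanceAs (Decidable (_ ∈ _))

instance (p q r s : Bool) : Decidable (ConvexForm p q r s) :=
  inferInstanceAs (Decidable (_ ∈ _))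

instance (σ : Fin n → Fin n → Fin n → Bool) (a b c d : Fin n) : Decidable (Convex4 σ a b c d) :=
  inferInstanceAs (Decidable (ConvexForm ..))

instance (σ : Fin n → Fin n → Fin n → Bool) (i j m : Fin n) : Decidable (LeftOf σ i j m) :=
  inferInstanceAs (Decidable (_ ∨ _))

theorem allowedForm_iff : ∀ {p q r s : Bool}, AllowedForm p q r s ↔ (q ≠ r → p = q ∧ s = r) := by
  decide

theorem AllowedForm.ite_add_ite : ∀ {p q r s : Bool}, AllowedForm p q r s →
    (if p = s then 1 else 0) + (if q ≠ r then 1 else 0) = if ConvexForm p q r s then 1 else 0 := by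
  decide

/-- The set of convex 4-tuples of `σ`. -/
def convexQuadruples (σ : Fin n → Fin n → Fin n → Bool) :
    Finset (Fin n × Fin n × Fin n × Fin n) :=
  {q ∈ increasingQuadruples (Fin n) | Convex4 σ q.1 q.2.1 q.2.2.1 q.2.2.2}

/-- A sign as an integer, `true` being `+1`. -/
def signVal (p : Bool) : ℤ := if p then 1 else -1

/-- The side of the directed edge `(i, j)` on which the vertex `m` lies: `1` for the left side, `-1`
for the right side and `0` for the endpoints. -/
def side (σ : Fin n → Fin n → Fin n → Bool) (i j m : Fin n) : ℤ :=
  if m = i ∨ m = j then 0 else if LeftOf σ i j m then 1 else -1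

/-- The number of vertices on the left of the directed edge `(i, j)` minus the number of vertices on
its right. -/
def imbalance (σ : Fin n → Fin n → Fin n → Bool) (i j : Fin n) : ℤ :=
  ∑ m, side σ i j m

section Side

variable {i j m : Fin n}

theorem side_of_lt_of_lt (him : i < m) (hmj : m < j) : side σ i j m = -signVal (σ i m j) := by
  grind [side, LeftOf, signVal]

theorem side_of_lt (hmi : m < i) (hij : i < j) : side σ i j m = signVal (σ m i j) := by
  grind [side, LeftOf, signVal]

theorem side_of_gt (hij : i < j) (hjm : j < m) : side σ i j m = signVal (σ i j m) := by
  grind [side, LeftOf, signVal]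

theorem sum_ite_eq_or_eq (hij : i < j) :
    ∑ m, (if m = i ∨ m = j then 0 else 1 : ℤ) = n - 2 := by
  have hsplit : ∀ m, (if m = i ∨ m = j then 0 else 1 : ℤ) =
      1 - (if m = i then 1 else 0) - (if m = j then 1 else 0) := by grind
  simp only [hsplit, Finset.sum_sub_distrib, Finset.sum_ite_eq', Finset.mem_univ, if_true,
    Finset.sum_const, Finset.card_univ, Fintype.card_fin, nsmul_eq_mul]
  ring

theorem imbalance_eq (hij : i < j) :
    imbalance σ i j = 2 * (leftCount σ i j : ℤ) - (n - 2) := by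
  have hcount : ∑ m, (if LeftOf σ i j m then 1 else 0) = (leftCount σ i j : ℤ) := by
    simp [leftCount, Set.ncard_eq_toFinset_card']
  have hside : ∀ m, side σ i j m =
      2 * (if LeftOf σ i j m then 1 else 0) - if m = i ∨ m = j then 0 else 1 := by
    grind [side, LeftOf]
  simp only [imbalance, hside, Finset.sum_sub_distrib, ← Finset.mul_sum, hcount,
    sum_ite_eq_or_eq hij]

theorem sum_side_sq (hij : i < j) : ∑ m, side σ i j m ^ 2 = (n : ℤ) - 2 := by
  rw [← sum_ite_eq_or_eq hij]
  exact Finset.sum_congr rfl fun m _ ↦ by grind [side]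

theorem leftCount_add_two_le (hij : i < j) : leftCount σ i j + 2 ≤ n := by
  have hle : imbalance σ i j ≤ ∑ m, side σ i j m ^ 2 :=
    Finset.sum_le_sum fun m _ ↦ Int.le_self_sq _
  rw [imbalance_eq hij, sum_side_sq hij] at hle
  omega

end Side

theorem AllowedForm.sum_mul_signVal : ∀ {p q r s : Bool}, AllowedForm p q r s →
    signVal p * signVal q + -signVal p * signVal r + -signVal q * -signVal r +
      signVal p * signVal s + signVal q * -signVal s + signVal r * signVal s =
        2 * if ConvexForm p q r s then 1 else 0 := by
  decide

theorem Admissible.four_mul_card_convexQuadruples (hσ : Admissible σ) :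
    4 * (#(convexQuadruples σ) : ℤ) =
      ∑ e ∈ increasingPairs (Fin n), (imbalance σ e.1 e.2 ^ 2 - (n - 2)) := by
  have hedge : ∀ e ∈ increasingPairs (Fin n), imbalance σ e.1 e.2 ^ 2 - (n - 2) =
      2 * ∑ f ∈ increasingPairs (Fin n), side σ e.1 e.2 f.1 * side σ e.1 e.2 f.2 := by
    intro e he
    rw [imbalance, sq_sum_eq_sum_sq_add, sum_side_sq (mem_increasingPairs.1 he),
      add_sub_cancel_left]
  rw [Finset.sum_congr rfl hedge, ← Finset.mul_sum, ← Finset.sum_product',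
    sum_product_increasingPairs _ (by grind [side]), convexQuadruples, Finset.card_filter,
    Nat.cast_sum, Finset.mul_sum, Finset.mul_sum]
  refine Finset.sum_congr rfl fun ⟨a, b, c, d⟩ hq ↦ ?_
  obtain ⟨hab, hbc, hcd⟩ := mem_increasingQuadruples.1 hq
  have hbd := hbc.trans hcd
  have hac := hab.trans hbc
  simp only [side_of_gt, side_of_lt, side_of_lt_of_lt, *]
  rw [(hσ a b c d hab hbc hcd).sum_mul_signVal]
  grind [Convex4]

section KEdges

variable {i j : Fin n}

/-- The number `k` for which the edge `{i, j}` is a `k`-edge of `σ`. -/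
noncomputable def edgeLevel (σ : Fin n → Fin n → Fin n → Bool) (i j : Fin n) : ℕ :=
  min (leftCount σ i j) (n - 2 - leftCount σ i j)

theorem Ek_eq_card (σ : Fin n → Fin n → Fin n → Bool) (k : ℕ) :
    Ek σ k = #{e ∈ increasingPairs (Fin n) | edgeLevel σ e.1 e.2 = k} := by
  simp only [Ek, ← Set.ncard_coe_finset, Finset.coe_filter, mem_increasingPairs]
  rfl

theorem Ele_eq_card (σ : Fin n → Fin n → Fin n → Bool) (k : ℕ) :
    Ele σ k = #{e ∈ increasingPairs (Fin n) | edgeLevel σ e.1 e.2 ≤ k} := by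
  simp_rw [Ele, Ek_eq_card, Finset.card_filter]
  rw [Finset.sum_comm]
  simp

theorem Elele_eq_sum (σ : Fin n → Fin n → Fin n → Bool) (K : ℕ) :
    Elele σ K = ∑ e ∈ increasingPairs (Fin n), (K + 1 - edgeLevel σ e.1 e.2) := by
  have hcount : ∀ m, ∑ k ∈ Finset.range (K + 1), (if m ≤ k then 1 else 0) = K + 1 - m := by
    intro m
    rw [← Finset.card_filter, ← Nat.card_Ico]
    congr 1
    grind
  simp_rw [Elele, Ele_eq_card, Finset.card_filter]
  rw [Finset.sum_comm]
  simp_rw [hcount]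

theorem ElelZ_sub_two_eq_sum (σ : Fin n → Fin n → Fin n → Bool) (K : ℕ) :
    ElelZ σ ((K : ℤ) - 2) = ∑ e ∈ increasingPairs (Fin n), (K - 1 - edgeLevel σ e.1 e.2) := by
  rcases lt_or_ge K 2 with hK | hK
  · rw [ElelZ, if_neg (by omega), Nat.sub_eq_zero_of_le (Nat.le_of_lt_succ hK)]
    simp
  · rw [ElelZ, if_pos (by omega), Elele_eq_sum]
    congr! 2
    omega

theorem two_mul_sum_range_sub (m K : ℕ) :
    2 * ∑ k ∈ Finset.range K, (k + 1 - m) = (K - m) * (K - m + 1) := by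
  induction K with
  | zero => simp
  | succ K ih =>
    rw [Finset.sum_range_succ, mul_add, ih]
    rcases le_or_gt m K with h | h
    · rw [Nat.sub_add_comm h]
      ring
    · simp [Nat.sub_eq_zero_of_le h.le, Nat.sub_eq_zero_of_le (Nat.succ_le_of_lt h)]

theorem two_mul_sum_Elele (σ : Fin n → Fin n → Fin n → Bool) (K : ℕ) :
    2 * ∑ k ∈ Finset.range K, Elele σ k =
      ∑ e ∈ increasingPairs (Fin n), (K - edgeLevel σ e.1 e.2) * (K - edgeLevel σ e.1 e.2 + 1) := by
  simp_rw [Elele_eq_sum]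
  rw [Finset.sum_comm, Finset.mul_sum]
  simp_rw [two_mul_sum_range_sub]

theorem edgeLevel_le (σ : Fin n → Fin n → Fin n → Bool) (i j : Fin n) :
    edgeLevel σ i j ≤ n / 2 - 1 := by
  grind [edgeLevel]

theorem imbalance_sq (hij : i < j) :
    imbalance σ i j ^ 2 = (n - 2 - 2 * (edgeLevel σ i j : ℤ)) ^ 2 := by
  have hle := leftCount_add_two_le (σ := σ) hij
  rw [imbalance_eq hij, sq_eq_sq_iff_eq_or_eq_neg, edgeLevel]
  omega

theorem imbalance_sq_sub (hij : i < j) :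
    ((imbalance σ i j ^ 2 - (n - 2) : ℤ) : ℚ) =
      4 * (((n / 2 - 1 - edgeLevel σ i j) * (n / 2 - 1 - edgeLevel σ i j + 1) : ℕ) : ℚ) -
        2 * (((n - 2) / 2 : ℕ) : ℚ) -
        2 * (1 + (-1 : ℚ) ^ n) * ((n / 2 - 1 - edgeLevel σ i j : ℕ) : ℚ) := by
  rw [imbalance_sq hij]
  have hn : 2 ≤ n := by omega
  have hlevel := edgeLevel_le σ i j
  obtain ⟨m, hm⟩ := Nat.exists_eq_add_of_le hlevel
  have hhalf : (n - 2) / 2 = edgeLevel σ i j + m := by omega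
  rw [hm, hhalf, Nat.add_sub_cancel_left]
  obtain hn' | hn' : n = 2 * (edgeLevel σ i j + m + 1) ∨ n = 2 * (edgeLevel σ i j + m + 1) + 1 := by
    omega
  · have hsign : (-1 : ℚ) ^ n = 1 := (even_iff_exists_two_mul.2 ⟨_, hn'⟩).neg_one_pow
    have hcast : (n : ℚ) = 2 * (edgeLevel σ i j + m + 1) := mod_cast hn'
    push_cast [hsign, hcast]
    ring
  · have hsign : (-1 : ℚ) ^ n = -1 := Odd.neg_one_pow ⟨_, hn'⟩
    have hcast : (n : ℚ) = 2 * (edgeLevel σ i j + m + 1) + 1 := mod_cast hn'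
    push_cast [hsign, hcast]
    ring

theorem sum_imbalance_sq_sub (σ : Fin n → Fin n → Fin n → Bool) :
    ((∑ e ∈ increasingPairs (Fin n), (imbalance σ e.1 e.2 ^ 2 - (n - 2)) : ℤ) : ℚ) =
      8 * ∑ k ∈ Finset.range (n / 2 - 1), (Elele σ k : ℚ) -
        2 * (n.choose 2 : ℚ) * (((n - 2) / 2 : ℕ) : ℚ) -
        2 * (1 + (-1 : ℚ) ^ n) * (ElelZ σ (((n / 2 : ℕ) : ℤ) - 2) : ℚ) := by
  rw [Int.cast_sum, Finset.sum_congr rfl fun e he ↦ imbalance_sq_sub (mem_increasingPairs.1 he),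
    Finset.sum_sub_distrib, Finset.sum_sub_distrib, ← Finset.mul_sum, ← Finset.mul_sum,
    Finset.sum_const, card_increasingPairs, Fintype.card_fin, ← Finset.mul_sum, ← Nat.cast_sum,
    ← Nat.cast_sum, ← two_mul_sum_Elele, ← ElelZ_sub_two_eq_sum, nsmul_eq_mul, Nat.cast_mul,
    Nat.cast_sum]
  ring

end KEdges

end Sig

namespace XMonotoneDrawing

open Set Filter Topology
open scoped Finset

variable {n : ℕ} {D : XMonotoneDrawing n} {i j k l a b c d a' b' c' : Fin n}

theorem crossSet_eq (D : XMonotoneDrawing n) (i j k l : Fin n) :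
    D.crossSet i j k l =
      Ioo (D.x (max i k)) (D.x (min j l)) ∩ (D.e i j - D.e k l) ⁻¹' {0} := by
  ext t
  simp [crossSet, D.x_strictMono.monotone.map_max, D.x_strictMono.monotone.map_min, sub_eq_zero,
    and_assoc]

theorem continuousOn_sub (hij : i < j) (hkl : k < l) :
    ContinuousOn (D.e i j - D.e k l) (Icc (D.x (max i k)) (D.x (min j l))) := by
  have hmono := D.x_strictMono.monotone
  exact ((D.cont i j hij).mono
      (Icc_subset_Icc (hmono (le_max_left _ _)) (hmono (min_le_left _ _)))).sub
    ((D.cont k l hkl).mono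
      (Icc_subset_Icc (hmono (le_max_right _ _)) (hmono (min_le_right _ _))))

theorem changesSignAt_sub (hij : i < j) (hkl : k < l) (hne : (i, j) ≠ (k, l)) {t : ℝ}
    (ht : t ∈ D.crossSet i j k l) : ChangesSignAt (D.e i j - D.e k l) t := by
  obtain ⟨hlt, hrt, heq⟩ := ht
  obtain ⟨ε, hε, hsign⟩ := D.sign_change i j k l hij hkl hne t hlt hrt heq
  filter_upwards [Ioo_mem_nhdsLT (max_lt hlt (sub_lt_self t hε))] with s hs
  filter_upwards [Ioo_mem_nhdsGT (lt_min hrt (lt_add_of_pos_right t hε))] with u hu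
  obtain ⟨hs₁, hs₂⟩ := max_lt_iff.1 hs.1
  obtain ⟨hu₁, hu₂⟩ := lt_min_iff.1 hu.2
  exact hsign s hs₁ hs₂ hs.2 u hu₁ hu.1 hu₂

theorem odd_crossCount_iff (hij : i < j) (hkl : k < l) (hne : (i, j) ≠ (k, l))
    (hlt : max i k < min j l) (hleft : (D.e i j - D.e k l) (D.x (max i k)) ≠ 0)
    (hright : (D.e i j - D.e k l) (D.x (min j l)) ≠ 0) :
    Odd (D.crossCount i j k l) ↔
      (D.e i j - D.e k l) (D.x (max i k)) * (D.e i j - D.e k l) (D.x (min j l)) < 0 := by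
  have hfin : (D.crossSet i j k l).Finite := D.cross_finite i j k l hij hkl hne
  rw [crossCount, crossSet_eq]
  rw [crossSet_eq] at hfin
  refine odd_ncard_zeros_iff (D.x_strictMono hlt) (continuousOn_sub hij hkl) hleft hright hfin
    fun t ht h0 ↦ changesSignAt_sub hij hkl hne ?_
  rw [crossSet_eq]
  exact ⟨ht, h0⟩

theorem crossCount_comm (D : XMonotoneDrawing n) (i j k l : Fin n) :
    D.crossCount i j k l = D.crossCount k l i j := by
  simp only [crossCount, crossSet, max_comm (D.x i), min_comm (D.x j), eq_comm (a := D.e i j _)]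

theorem crossCount_eq_zero_of_le (D : XMonotoneDrawing n) (i : Fin n) (h : j ≤ k) (l : Fin n) :
    D.crossCount i j k l = 0 := by
  have hempty : Ioo (D.x (max i k)) (D.x (min j l)) = ∅ :=
    Ioo_eq_empty_of_le <| D.x_strictMono.monotone <| by simp [h]
  simp [crossCount, crossSet_eq, hempty]

theorem sig_eq_sig_iff (hab : a < b) (hbc : b < c) (hab' : a' < b') (hbc' : b' < c') :
    D.sig a b c = D.sig a' b' c' ↔ 0 < D.e a c (D.x b) * D.e a' c' (D.x b') := by
  have hne := D.avoid_vertex a b c hab hbc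
  have hne' := D.avoid_vertex a' b' c' hab' hbc'
  grind [sig, mul_pos_iff]

theorem sig_ne_sig_iff (hab : a < b) (hbc : b < c) (hab' : a' < b') (hbc' : b' < c') :
    D.sig a b c ≠ D.sig a' b' c' ↔ D.e a c (D.x b) * D.e a' c' (D.x b') < 0 := by
  have hne := D.avoid_vertex a b c hab hbc
  have hne' := D.avoid_vertex a' b' c' hab' hbc'
  grind [sig, mul_neg_iff]

theorem odd_crossCount_interlaced (hab : a < b) (hbc : b < c) (hcd : c < d) :
    Odd (D.crossCount a c b d) ↔ D.sig a b c = D.sig b c d := by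
  have hac := hab.trans hbc
  have hbd := hbc.trans hcd
  have hodd := D.odd_crossCount_iff hac hbd (by simp [hab.ne])
  simp only [max_eq_right hab.le, min_eq_left hcd.le, Pi.sub_apply, D.end_left b d hbd,
    D.end_right a c hac, sub_zero, zero_sub, neg_ne_zero, mul_neg, neg_neg_iff_pos] at hodd
  rw [hodd hbc (D.avoid_vertex a b c hab hbc) (D.avoid_vertex b c d hbc hcd),
    sig_eq_sig_iff hab hbc hbc hcd]

theorem odd_crossCount_nested (hab : a < b) (hbc : b < c) (hcd : c < d) :
    Odd (D.crossCount a d b c) ↔ D.sig a b d ≠ D.sig a c d := by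
  have hac := hab.trans hbc
  have hbd := hbc.trans hcd
  have hodd := D.odd_crossCount_iff (hab.trans hbd) hbc (by simp [hab.ne])
  simp only [max_eq_right hab.le, min_eq_right hcd.le, Pi.sub_apply, D.end_left b c hbc,
    D.end_right b c hbc, sub_zero] at hodd
  rw [hodd hbc (D.avoid_vertex a b d hab hbd) (D.avoid_vertex a c d hac hcd),
    sig_ne_sig_iff hab hbd hac hcd]

namespace Semisimple

theorem weaklySemisimple (hD : D.Semisimple) : D.WeaklySemisimple :=
  fun i j k l hij hkl hne hadj ↦ by simp [hD i j k l hij hkl hne hadj]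

theorem mul_pos_sub (hD : D.Semisimple) (hij : i < j) (hkl : k < l) (hne : (i, j) ≠ (k, l))
    (hadj : Adj i j k l) {s t : ℝ} (hs : s ∈ Icc (D.x (max i k)) (D.x (min j l)))
    (ht : t ∈ Icc (D.x (max i k)) (D.x (min j l))) (hs0 : (D.e i j - D.e k l) s ≠ 0)
    (ht0 : (D.e i j - D.e k l) t ≠ 0) :
    0 < (D.e i j - D.e k l) s * (D.e i j - D.e k l) t := by
  have hempty : D.crossSet i j k l = ∅ :=
    (ncard_eq_zero (D.cross_finite i j k l hij hkl hne)).1 (hD i j k l hij hkl hne hadj)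
  refine mul_pos_of_isPreconnected isPreconnected_uIcc
    ((continuousOn_sub hij hkl).mono (uIcc_subset_Icc hs ht)) (fun u hu hu0 ↦ ?_)
    left_mem_uIcc right_mem_uIcc
  have hu' : u ∈ Ioo (D.x (max i k)) (D.x (min j l)) := by grind [mem_uIcc]
  exact (crossSet_eq D i j k l ▸ hempty).subset ⟨hu', hu0⟩

theorem sig_eq_of_sig_ne_left (hD : D.Semisimple) (hab : a < b) (hbc : b < c) (hcd : c < d)
    (h : D.sig a b d ≠ D.sig a c d) : D.sig a b c = D.sig a b d := by
  have hac := hab.trans hbc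
  have hbd := hbc.trans hcd
  rw [sig_ne_sig_iff hab hbd hac hcd] at h
  rw [sig_eq_sig_iff hab hbc hab hbd]
  by_contra! hle
  have hpos : 0 < (D.e a c (D.x b) - D.e a d (D.x b)) * (0 - D.e a d (D.x c)) := by
    have hsame := hD.mul_pos_sub (s := D.x b) (t := D.x c) hac (hac.trans hcd) (by simp [hcd.ne])
      (.inl rfl)
    simp only [max_self, min_eq_left hcd.le, Pi.sub_apply, D.end_right a c hac] at hsame
    refine hsame ⟨(D.x_strictMono hab).le, (D.x_strictMono hbc).le⟩
      ⟨(D.x_strictMono hac).le, le_rfl⟩ ?_ ?_ <;> grind [mul_neg_iff, mul_nonpos_iff]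
  grind [mul_pos_iff, mul_neg_iff, mul_nonpos_iff]

theorem sig_eq_of_sig_ne_right (hD : D.Semisimple) (hab : a < b) (hbc : b < c) (hcd : c < d)
    (h : D.sig a b d ≠ D.sig a c d) : D.sig b c d = D.sig a c d := by
  have hac := hab.trans hbc
  have hbd := hbc.trans hcd
  rw [sig_ne_sig_iff hab hbd hac hcd] at h
  rw [sig_eq_sig_iff hbc hcd hac hcd]
  by_contra! hle
  have hpos : 0 < (D.e a d (D.x b) - 0) * (D.e a d (D.x c) - D.e b d (D.x c)) := by
    have hsame := hD.mul_pos_sub (s := D.x b) (t := D.x c) (hac.trans hcd) hbd (by simp [hab.ne])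
      (.inr (.inr (.inr rfl)))
    simp only [min_self, max_eq_right hab.le, Pi.sub_apply, D.end_left b d hbd] at hsame
    refine hsame ⟨le_rfl, (D.x_strictMono hbd).le⟩
      ⟨(D.x_strictMono hbc).le, (D.x_strictMono hcd).le⟩ ?_ ?_ <;>
      grind [mul_neg_iff, mul_nonpos_iff]
  grind [mul_pos_iff, mul_neg_iff, mul_nonpos_iff]

theorem admissible_sig (hD : D.Semisimple) : Sig.Admissible D.sig :=
  fun _ _ _ _ hab hbc hcd ↦ Sig.allowedForm_iff.2 fun h ↦
    ⟨hD.sig_eq_of_sig_ne_left hab hbc hcd h, hD.sig_eq_of_sig_ne_right hab hbc hcd h⟩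

end Semisimple

theorem ocr_eq_card_convexQuadruples (hD : D.WeaklySemisimple) (hσ : Sig.Admissible D.sig) :
    D.ocr = #(Sig.convexQuadruples D.sig) := by
  let oddPair : (Fin n × Fin n) × Fin n × Fin n → ℕ := fun ((i, j), (k, l)) ↦
    if (i, j) ≠ (k, l) ∧ Odd (D.crossCount i j k l) then 1 else 0
  have hpairs : {p : (Fin n × Fin n) × (Fin n × Fin n) | p.1.1 < p.1.2 ∧ p.2.1 < p.2.2 ∧
      p.1 ≠ p.2 ∧ Odd (D.crossCount p.1.1 p.1.2 p.2.1 p.2.2)}.ncard =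
      ∑ p ∈ increasingPairs (Fin n) ×ˢ increasingPairs (Fin n), oddPair p := by
    rw [← Finset.card_filter, ← ncard_coe_finset]
    simp only [Finset.coe_filter, Finset.mem_product, mem_increasingPairs, and_assoc]
  have hadj : ∀ i j k l, i < j → k < l → i = k ∨ i = l ∨ j = k ∨ j = l →
      oddPair ((i, j), (k, l)) = 0 := by
    intro i j k l hij hkl hadj
    refine if_neg fun ⟨hne, hodd⟩ ↦ ?_
    exact Nat.not_odd_iff_even.2 (hD i j k l hij hkl hne hadj) hodd
  have hquad : ∀ a b c d, a < b → b < c → c < d →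
      oddPair ((a, b), (c, d)) + oddPair ((a, c), (b, d)) + oddPair ((a, d), (b, c)) +
        oddPair ((b, c), (a, d)) + oddPair ((b, d), (a, c)) + oddPair ((c, d), (a, b)) =
      2 * if Sig.Convex4 D.sig a b c d then 1 else 0 := by
    intro a b c d hab hbc hcd
    have hform := (hσ a b c d hab hbc hcd).ite_add_ite
    simp only [oddPair, crossCount_comm D b, crossCount_comm D c d,
      odd_crossCount_interlaced hab hbc hcd, odd_crossCount_nested hab hbc hcd,
      D.crossCount_eq_zero_of_le a hbc.le d]
    grind [Sig.Convex4, hab.ne, hcd.ne]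
  have hdouble : ∑ p ∈ increasingPairs (Fin n) ×ˢ increasingPairs (Fin n), oddPair p =
      2 * #(Sig.convexQuadruples D.sig) := by
    rw [sum_product_increasingPairs _ hadj, Sig.convexQuadruples, Finset.card_filter,
      Finset.mul_sum]
    refine Finset.sum_congr rfl fun ⟨a, b, c, d⟩ hq ↦ ?_
    obtain ⟨hab, hbc, hcd⟩ := mem_increasingQuadruples.1 hq
    exact hquad a b c d hab hbc hcd
  rw [ocr, hpairs, hdouble, Nat.mul_div_cancel_left _ two_pos]

end XMonotoneDrawing

theorem semisimple_monotone_ocr_formula_general (n : ℕ) (D : XMonotoneDrawing n)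
    (hD : D.WeaklySemisimple) (hσ : Sig.Admissible D.sig) :
    (D.ocr : ℚ) =
      2 * ∑ k ∈ Finset.range (n / 2 - 1), (Sig.Elele D.sig k : ℚ) -
        (1 / 2 : ℚ) * (n.choose 2 : ℚ) * (((n - 2) / 2 : ℕ) : ℚ) -
        (1 / 2 : ℚ) * (1 + (-1 : ℚ) ^ n) *
          (Sig.ElelZ D.sig (((n / 2 : ℕ) : ℤ) - 2) : ℚ) := by
  have hfour : 4 * (D.ocr : ℚ) =
      ((∑ e ∈ increasingPairs (Fin n), (Sig.imbalance D.sig e.1 e.2 ^ 2 - (n - 2)) : ℤ) : ℚ) := by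
    rw [D.ocr_eq_card_convexQuadruples hD hσ, ← hσ.four_mul_card_convexQuadruples]
    push_cast
    rfl
  rw [Sig.sum_imbalance_sq_sub] at hfour
  linear_combination hfour / 4

/-- For every semisimple x-monotone drawing `D` of `K n`,
`ocr(D) = 2·Σ_{k=0}^{⌊n/2⌋−2} E_{≤≤k}(D) − (1/2)·C(n,2)·⌊(n−2)/2⌋
  − (1/2)(1+(−1)^n)·E_{≤≤⌊n/2⌋−2}(D)`. -/
theorem semisimple_monotone_ocr_formula (n : ℕ) (D : XMonotoneDrawing n)
    (hD : D.Semisimple) :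
    (D.ocr : ℚ) =
      2 * ∑ k ∈ Finset.range (n / 2 - 1), (Sig.Elele D.sig k : ℚ) -
        (1 / 2 : ℚ) * (n.choose 2 : ℚ) * (((n - 2) / 2 : ℕ) : ℚ) -
        (1 / 2 : ℚ) * (1 + (-1 : ℚ) ^ n) *
          (Sig.ElelZ D.sig (((n / 2 : ℕ) : ℤ) - 2) : ℚ) :=
  semisimple_monotone_ocr_formula_general n D hD.weaklySemisimple hD.admissible_sig
end
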